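/- arXiv:1204.1082 — 11 statements merged into one kernel-verified Lean document; each statement's English description precedes it below -/
import Mathlib

section
/- For every OnceSC instance (x,b), the RoundRobin schedule defined by ρ_i = r_i := max(x_i, 1 − x_i) and τ_i = ∑_{j<i} b_j/r_j is feasible with lifetime ∑_{i=1}^n b_i/r_i; that is, every point (u,t) ∈ [0,1] × [0, ∑_i b_i/r_i] is covered by some sensor. -/
/-! The radius `max x (1 - x)` is positive and reaches both endpoints of `[0,1]`, so an active
sensor covers all of `[0,1]`. It remains to find a sensor active at time `t`, which is
`exists_partialSum_interval`: the activity intervals are laid end to end from time `0`. -/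

/-- A OnceSC schedule `(ρ, τ)` for the instance with sensors `1,…,n` at locations `x`
with batteries `b` has lifetime `T` if every point of `[0,1]` is covered at every
time in `[0,T]`. -/
def IsLifetime (n : ℕ) (x b ρ τ : ℕ → ℝ) (T : ℝ) : Prop :=
  ∀ u ∈ Set.Icc (0:ℝ) 1, ∀ t ∈ Set.Icc (0:ℝ) T,
    ∃ i ∈ Finset.Icc 1 n, 0 < ρ i ∧ |u - x i| ≤ ρ i ∧ τ i ≤ t ∧ t ≤ τ i + b i / ρ i

/-- The consecutive intervals `[∑_{j<i} d j, ∑_{j≤i} d j]`, `1 ≤ i ≤ n`, cover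
`[0, ∑_{j≤n} d j]`: by induction on `n`, compare `t` with
the last breakpoint. -/
theorem exists_partialSum_interval (d : ℕ → ℝ) (t : ℝ) (ht : 0 ≤ t) (n : ℕ) (hn : 1 ≤ n)
    (htn : t ≤ ∑ j ∈ Finset.Icc 1 n, d j) :
    ∃ i ∈ Finset.Icc 1 n, ∑ j ∈ Finset.Ico 1 i, d j ≤ t ∧
      t ≤ ∑ j ∈ Finset.Ico 1 i, d j + d i := by
  induction n, hn using Nat.le_induction with
  | base => exact ⟨1, by simp, by simpa using ht, by simpa using htn⟩
  | succ m hm ih =>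
    rcases le_total t (∑ j ∈ Finset.Icc 1 m, d j) with h | h
    · obtain ⟨i, hi, h1, h2⟩ := ih h
      exact ⟨i, Finset.Icc_subset_Icc_right m.le_succ hi, h1, h2⟩
    · have hIco : Finset.Ico 1 (m + 1) = Finset.Icc 1 m := by ext; simp
      rw [Finset.sum_Icc_succ_top (by omega)] at htn
      exact ⟨m + 1, by simp, by rwa [hIco], by rwa [hIco]⟩

/-- The RoundRobin schedule, with `ρ i = max (x i) (1 - x i)` and
`τ i = ∑_{j<i} b j / r j`, is feasible with lifetime `∑ i, b i / r i`. -/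
theorem roundRobin_is_feasible
    (n : ℕ) (hn : 1 ≤ n) (x b : ℕ → ℝ)
    (hx : ∀ i ∈ Finset.Icc 1 n, x i ∈ Set.Icc (0:ℝ) 1)
    (hb : ∀ i ∈ Finset.Icc 1 n, 0 < b i) :
    IsLifetime n x b
      (fun i => max (x i) (1 - x i))
      (fun i => ∑ j ∈ Finset.Ico 1 i, b j / max (x j) (1 - x j))
      (∑ i ∈ Finset.Icc 1 n, b i / max (x i) (1 - x i)) := by
  intro u hu t ht
  obtain ⟨i, hi, h1, h2⟩ := exists_partialSum_interval
    (fun j => b j / max (x j) (1 - x j)) t ht.1 n hn ht.2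
  have hl := le_max_left (x i) (1 - x i)
  have hr := le_max_right (x i) (1 - x i)
  refine ⟨i, hi, ?_, ?_, h1, h2⟩
  · show 0 < max (x i) (1 - x i)
    linarith
  · show |u - x i| ≤ max (x i) (1 - x i)
    rw [abs_le]
    constructor <;> linarith [hu.1, hu.2]
end

section
/- Let (x,b) be a RadSC instance in which every b_i is a positive integer, and let ρ be a radius assignment with ρ_i > 0 and b_i = ρ_i·T for all i, having lifetime T. For each sensor i, define its b_i children at locations y_{i,k} = x_i − ρ_i + (2k−1)·ρ_i/b_i for k = 1,…,b_i, each with unit battery and radius σ_{i,k} = ρ_i/b_i. Then the assignment σ has lifetime T for the unit-battery instance consisting of all children: every u ∈ [0,1] is covered by some child, each child survives exactly 1/σ_{i,k} = T time units, and for each i the union ∪_k [y_{i,k} − σ_{i,k}, y_{i,k} + σ_{i,k}] equals [x_i − ρ_i, x_i + ρ_i]. -/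
/-!
Put `σ = ρ i / b i`. The child `k` of sensor `i` covers
`[x i - ρ i + 2 (k - 1) σ, x i - ρ i + 2 k σ]`, so consecutive children abut, and the `b i` of them
tile an interval of length `2 (b i) σ = 2 ρ i` starting at `x i - ρ i`, that is,
`[x i - ρ i, x i + ρ i]` (`iUnion_children_eq`). A point of `[0, 1]` covered by a sensor is thus
covered by one of its children, and `1 / σ = b i / ρ i = T` follows from `b i = ρ i * T`.
-/

/-- A point of `[c, c + 2 m s]` lies in one of the `m` consecutive intervals of length `2 s` starting
at `c`. No sign condition on `s` is needed: the induction only compares `u` with `c + 2 m s`. -/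
lemma exists_tile (c s u : ℝ) (hc : c ≤ u) (m : ℕ) (hm : 1 ≤ m) (hu : u ≤ c + 2 * m * s) :
    ∃ k ∈ Finset.Icc 1 m, c + 2 * ((k : ℝ) - 1) * s ≤ u ∧ u ≤ c + 2 * k * s := by
  induction m, hm using Nat.le_induction with
  | base => exact ⟨1, by simp, by simpa using hc, hu⟩
  | succ m hm ih =>
    rcases le_total u (c + 2 * m * s) with h | h
    · obtain ⟨k, hk, hku⟩ := ih h
      exact ⟨k, Finset.Icc_subset_Icc_right (Nat.le_succ m) hk, hku⟩
    · exact ⟨m + 1, by simp, by simpa using h, hu⟩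

/-- The intervals of the `m` children of a sensor at `x` with radius `r` have as union the interval
of the sensor. -/
lemma iUnion_children_eq (x r : ℝ) (m : ℕ) (hm : 0 < m) (hr : 0 < r) :
    (⋃ k ∈ Finset.Icc 1 m,
        Set.Icc ((x - r + (2*(k:ℝ) - 1) * r / (m : ℝ)) - r / (m : ℝ))
          ((x - r + (2*(k:ℝ) - 1) * r / (m : ℝ)) + r / (m : ℝ)))
      = Set.Icc (x - r) (x + r) := by
  have hm' : (0 : ℝ) < m := by exact_mod_cast hm
  have hs : 0 < r / (m : ℝ) := div_pos hr hm'
  have hrs : m * (r / (m : ℝ)) = r := mul_div_cancel₀ r hm'.ne'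
  simp only [mul_div_assoc]
  generalize r / (m : ℝ) = s at hs hrs ⊢
  ext u
  simp only [Set.mem_iUnion, Set.mem_Icc, exists_prop]
  constructor
  · rintro ⟨k, hk, h1, h2⟩
    rw [Finset.mem_Icc] at hk
    have hk1 : (1 : ℝ) ≤ k := by exact_mod_cast hk.1
    have hk2 : (k : ℝ) ≤ m := by exact_mod_cast hk.2
    have h3 := mul_le_mul_of_nonneg_right hk1 hs.le
    have h4 := mul_le_mul_of_nonneg_right hk2 hs.le
    constructor <;> linarith
  · rintro ⟨h1, h2⟩
    obtain ⟨k, hk, h3, h4⟩ := exists_tile (x - r) s u h1 m hm (by linarith)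
    exact ⟨k, hk, by linarith, by linarith⟩

/-- Splitting each sensor `i` (with positive integer battery `b i`, radius
`ρ i > 0`, and `b i = ρ i · T`) into `b i` unit-battery children of radius
`ρ i / b i` located at `y i k = x i - ρ i + (2k-1)·ρ i / b i` (k = 1,…,b i)
yields a unit-battery RadSC assignment with lifetime `T`: every `u ∈ [0,1]`
is covered by some child, each child survives exactly `1/(ρ i / b i) = T`
time units, and the children of sensor `i` together cover exactly
`[x i - ρ i, x i + ρ i]`. -/
theorem children_assignment_lifetime
    (n : ℕ) (x : ℕ → ℝ) (b : ℕ → ℕ) (ρ : ℕ → ℝ) (T : ℝ)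
    (hmono : ∀ i, 1 ≤ i → i < n → x i ≤ x (i+1))
    (hb : ∀ i ∈ Finset.Icc 1 n, 0 < b i)
    (hρ : ∀ i ∈ Finset.Icc 1 n, 0 < ρ i)
    (hbT : ∀ i ∈ Finset.Icc 1 n, (b i : ℝ) = ρ i * T)
    (hlife : ∀ u ∈ Set.Icc (0:ℝ) 1, ∃ i ∈ Finset.Icc 1 n,
      0 < ρ i ∧ |u - x i| ≤ ρ i ∧ T ≤ (b i : ℝ) / ρ i) :
    (∀ u ∈ Set.Icc (0:ℝ) 1, ∃ i ∈ Finset.Icc 1 n, ∃ k ∈ Finset.Icc 1 (b i),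
        0 < ρ i / (b i : ℝ) ∧
        |u - (x i - ρ i + (2*(k:ℝ) - 1) * ρ i / (b i : ℝ))| ≤ ρ i / (b i : ℝ) ∧
        T ≤ 1 / (ρ i / (b i : ℝ))) ∧
    (∀ i ∈ Finset.Icc 1 n, 1 / (ρ i / (b i : ℝ)) = T) ∧
    (∀ i ∈ Finset.Icc 1 n,
      (⋃ k ∈ Finset.Icc 1 (b i),
          Set.Icc ((x i - ρ i + (2*(k:ℝ) - 1) * ρ i / (b i : ℝ)) - ρ i / (b i : ℝ))
            ((x i - ρ i + (2*(k:ℝ) - 1) * ρ i / (b i : ℝ)) + ρ i / (b i : ℝ)))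
        = Set.Icc (x i - ρ i) (x i + ρ i)) := by
  have hT : ∀ i ∈ Finset.Icc 1 n, 1 / (ρ i / (b i : ℝ)) = T := fun i hi => by
    rw [one_div_div, hbT i hi, mul_div_cancel_left₀ T (hρ i hi).ne']
  refine ⟨fun u hu => ?_, hT, fun i hi => iUnion_children_eq _ _ _ (hb i hi) (hρ i hi)⟩
  obtain ⟨i, hi, hr, hcov, -⟩ := hlife u hu
  have hmem : u ∈ Set.Icc (x i - ρ i) (x i + ρ i) := by
    rw [abs_le] at hcov
    constructor <;> linarith
  rw [← iUnion_children_eq _ _ _ (hb i hi) hr] at hmem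
  simp only [Set.mem_iUnion, Set.mem_Icc, exists_prop] at hmem
  obtain ⟨k, hk, h1, h2⟩ := hmem
  refine ⟨i, hi, k, hk, div_pos hr (Nat.cast_pos.mpr (hb i hi)), ?_, (hT i hi).ge⟩
  rw [abs_le]
  constructor <;> linarith
end

section
/- Let (x,b) have locations x_1,…,x_n ∈ ℝ and positive integer batteries b_i, let ρ_i > 0 for each i, and for each sensor i define its b_i children at locations y_{i,k} = x_i − ρ_i + (2k−1)·ρ_i/b_i for k = 1,…,b_i (so the children's average location is x_i). Then ∑_i ∑_{k=1}^{b_i} max(y_{i,k}, 1 − y_{i,k}) ≥ ∑_i b_i·max(x_i, 1 − x_i), and consequently RR'(y, 1) ≤ RR'(x, b), where the left side is the RR' value of the unit-battery instance of all children. -/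
/-!
The children of a sensor average to the parent's location: the offsets `(2k - 1)·ρ/b - ρ` sum to
zero because the first `b` odd numbers sum to `b²` (`sum_odd_Icc`). Since `t ↦ max t (1 - t)` is
convex, Jensen's inequality shows that splitting a sensor cannot decrease its radius sum
(`children_radius_ge`); concretely, the sum of maxima dominates both the sum of the `y k` and the
sum of the `1 - y k`. The comparison of the `RR'` values follows, since they have the same numerator
and positive denominators.
-/

lemma sum_odd_Icc (m : ℕ) : ∑ k ∈ Finset.Icc 1 m, (2 * (k : ℝ) - 1) = (m : ℝ) ^ 2 := by
  induction m with
  | zero => simp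
  | succ m ih =>
    rw [Finset.sum_Icc_succ_top (by omega), ih]
    push_cast
    ring

lemma sum_children (m : ℕ) (hm : 0 < m) (x r : ℝ) :
    ∑ k ∈ Finset.Icc 1 m, (x - r + (2 * (k : ℝ) - 1) * r / (m : ℝ)) = m * x := by
  have hm' : (m : ℝ) ≠ 0 := by positivity
  rw [Finset.sum_add_distrib, ← Finset.sum_div, ← Finset.sum_mul, sum_odd_Icc]
  simp only [Finset.sum_const, Nat.card_Icc, Nat.add_sub_cancel, nsmul_eq_mul]
  field_simp
  ring

/-- Jensen's inequality for the convex function `t ↦ max t (1 - t)` and the children of one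
sensor. -/
lemma children_radius_ge (m : ℕ) (hm : 0 < m) (x r : ℝ) :
    (m : ℝ) * max x (1 - x) ≤ ∑ k ∈ Finset.Icc 1 m,
      max (x - r + (2 * (k : ℝ) - 1) * r / (m : ℝ))
        (1 - (x - r + (2 * (k : ℝ) - 1) * r / (m : ℝ))) := by
  rw [mul_max_of_nonneg _ _ (Nat.cast_nonneg m)]
  apply max_le
  · rw [← sum_children m hm x r]
    exact Finset.sum_le_sum fun k _ => le_max_left _ _
  · have h : (m : ℝ) * (1 - x) = ∑ k ∈ Finset.Icc 1 m,
        (1 - (x - r + (2 * (k : ℝ) - 1) * r / (m : ℝ))) := by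
      rw [Finset.sum_sub_distrib, sum_children m hm x r]
      simp
      ring
    rw [h]
    exact Finset.sum_le_sum fun k _ => le_max_right _ _

/-- Splitting sensor `i` (integer battery `b i`, radius `ρ i > 0`) into `b i`
unit-battery children at `y i k = x i - ρ i + (2k-1)·ρ i / b i` (k = 1,…,b i)
does not decrease the total weighted RoundRobin radius:
`∑ i ∑ k max (y i k) (1 - y i k) ≥ ∑ i b i · max (x i) (1 - x i)`, and
consequently `RR'(y, 1) ≤ RR'(x, b)`. -/
theorem children_rr'_le
    (n : ℕ) (x : ℕ → ℝ) (b : ℕ → ℕ) (ρ : ℕ → ℝ)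
    (hb : ∀ i ∈ Finset.Icc 1 n, 0 < b i)
    (hρ : ∀ i ∈ Finset.Icc 1 n, 0 < ρ i) :
    (∑ i ∈ Finset.Icc 1 n, ∑ k ∈ Finset.Icc 1 (b i),
        max (x i - ρ i + (2*(k:ℝ) - 1) * ρ i / (b i : ℝ))
          (1 - (x i - ρ i + (2*(k:ℝ) - 1) * ρ i / (b i : ℝ)))
      ≥ ∑ i ∈ Finset.Icc 1 n, (b i : ℝ) * max (x i) (1 - x i)) ∧
    ((∑ i ∈ Finset.Icc 1 n, (b i : ℝ)) ^ 2 /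
        (∑ i ∈ Finset.Icc 1 n, ∑ k ∈ Finset.Icc 1 (b i),
          max (x i - ρ i + (2*(k:ℝ) - 1) * ρ i / (b i : ℝ))
            (1 - (x i - ρ i + (2*(k:ℝ) - 1) * ρ i / (b i : ℝ))))
      ≤ (∑ i ∈ Finset.Icc 1 n, (b i : ℝ)) ^ 2 /
        (∑ i ∈ Finset.Icc 1 n, (b i : ℝ) * max (x i) (1 - x i))) := by
  have key := Finset.sum_le_sum fun i hi => children_radius_ge (b i) (hb i hi) (x i) (ρ i)
  refine ⟨key, ?_⟩
  rcases Nat.eq_zero_or_pos n with rfl | hn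
  -- with no sensors, both sides are `0 / 0`
  · simp
  · have hpos : 0 < ∑ i ∈ Finset.Icc 1 n, (b i : ℝ) * max (x i) (1 - x i) := by
      refine Finset.sum_pos (fun i hi => ?_) ⟨1, Finset.mem_Icc.mpr ⟨le_rfl, hn⟩⟩
      have hbi : (0 : ℝ) < b i := Nat.cast_pos.mpr (hb i hi)
      have hr : 0 < max (x i) (1 - x i) := by
        linarith [le_max_left (x i) (1 - x i), le_max_right (x i) (1 - x i)]
      exact mul_pos hbi hr
    exact div_le_div_of_nonneg_left (sq_nonneg _) hpos key
end

section
/- Let x_1 ≤ … ≤ x_n be real numbers (sensor locations, possibly outside [0,1]) with at least one x_i ∈ [0,1], each with unit battery, and let Δ be as defined below. Then the optimal RadSC lifetime of this instance equals 2/Δ: (a) the assignment ρ_i = Δ/2 for all i has lifetime 2/Δ, and (b) no radius assignment has lifetime strictly greater than 2/Δ. -/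
/-!
With unit batteries, an assignment has positive lifetime `T` exactly when the sensors of radius at
most `1 / T` cover `[0,1]`, so the optimal lifetime is `1 / r`, where `r` is the largest distance
from a point of `[0,1]` to the nearest sensor. Everything reduces to `r = Δ / 2`.

* Every point `u` is within `Δ / 2` of a sensor: between two consecutive sensors the nearer one is
  at distance at most half the gap, and `Δ0`, `Δ1` play the same role to the left of `x i0` and to
  the right of `x i1`.
* Some point is at distance at least `Δ / 2` from every sensor: the midpoint of the gap attaining
  `Δ`, or the endpoint `0` (resp. `1`) when `Δ = 2 * x i0` (resp. `Δ = 2 * (1 - x i1)`), in which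
  case no sensor outside `[0,1]` is closer to that endpoint.

`Δ` is positive because otherwise all sensors `i0, …, i1` would coincide while also reaching both
`0` and `1`.
-/

/-- A radius assignment `ρ` for the unit-battery RadSC instance with sensors
`1,…,n` at locations `x` has lifetime `T` if every `u ∈ [0,1]` is covered by
some sensor `i` with `0 < ρ i`, `|u - x i| ≤ ρ i`, and `T ≤ 1 / ρ i`. -/
def UnitRadLifetime (n : ℕ) (x ρ : ℕ → ℝ) (T : ℝ) : Prop :=
  ∀ u ∈ Set.Icc (0:ℝ) 1, ∃ i ∈ Finset.Icc 1 n, 0 < ρ i ∧ |u - x i| ≤ ρ i ∧ T ≤ 1 / ρ i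

theorem sensors_monotone {n : ℕ} {x : ℕ → ℝ}
    (hmono : ∀ i, 1 ≤ i → i < n → x i ≤ x (i+1)) {i j : ℕ}
    (hi : 1 ≤ i) (hij : i ≤ j) (hj : j ≤ n) : x i ≤ x j := by
  induction j, hij using Nat.le_induction with
  | base => exact le_rfl
  | succ k hk ih => exact (ih (by omega)).trans (hmono k (by omega) (by omega))

theorem exists_consecutive_between (x : ℕ → ℝ) (u : ℝ) {a b : ℕ} (hab : a ≤ b)
    (ha : x a ≤ u) (hb : u < x b) : ∃ i, a ≤ i ∧ i < b ∧ x i ≤ u ∧ u ≤ x (i+1) := by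
  induction b, hab using Nat.le_induction with
  | base => linarith
  | succ k hk ih =>
    rcases lt_or_ge u (x k) with h | h
    · obtain ⟨i, h1, h2, h3⟩ := ih h
      exact ⟨i, h1, by omega, h3⟩
    · exact ⟨k, hk, by omega, h, hb.le⟩

theorem near_endpoint_of_gap_le {a b u D : ℝ} (ha : a ≤ u) (hb : u ≤ b) (h : b - a ≤ D) :
    |u - a| ≤ D / 2 ∨ |u - b| ≤ D / 2 := by
  rw [abs_of_nonneg (by linarith), abs_of_nonpos (by linarith)]
  by_contra! hc
  linarith [hc.1, hc.2]

/-- The midpoint of the gap between sensors `k` and `k + 1` is at distance at least half the gap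
from every sensor. -/
theorem half_gap_le_dist {n : ℕ} {x : ℕ → ℝ}
    (hmono : ∀ i, 1 ≤ i → i < n → x i ≤ x (i+1)) {k : ℕ} (hk : 1 ≤ k) (hkn : k < n) :
    ∀ i ∈ Finset.Icc 1 n, (x (k+1) - x k) / 2 ≤ |(x (k+1) + x k) / 2 - x i| := by
  intro i hi
  rw [Finset.mem_Icc] at hi
  rcases le_or_gt i k with h | h
  · have := sensors_monotone hmono hi.1 h hkn.le
    exact le_trans (by linarith) (le_abs_self _)
  · have := sensors_monotone hmono (by omega : 1 ≤ k + 1) h hi.2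
    exact le_trans (by linarith) (neg_le_abs _)

/-- The optimal lifetime of a unit-battery RadSC instance is `2/Δ`:
the constant assignment `Δ/2` achieves lifetime `2/Δ`, and no assignment
achieves a larger lifetime.  Here `i0 = min {i : x i ≥ 0}`,
`i1 = max {i : x i ≤ 1}`, `Δ0`, `Δ1` are the boundary gaps, and `Δ` is the
maximum of `Δ0`, `Δ1`, and the internal gaps `x (i+1) - x i` for `i0 ≤ i < i1`. -/
theorem unit_radsc_opt_eq_two_div_delta
    (n : ℕ) (x : ℕ → ℝ)
    (hmono : ∀ i, 1 ≤ i → i < n → x i ≤ x (i+1))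
    (hone : ∃ j ∈ Finset.Icc 1 n, x j ∈ Set.Icc (0:ℝ) 1)
    (i0 i1 : ℕ)
    (hi0 : i0 ∈ Finset.Icc 1 n ∧ 0 ≤ x i0 ∧ ∀ j ∈ Finset.Icc 1 n, 0 ≤ x j → i0 ≤ j)
    (hi1 : i1 ∈ Finset.Icc 1 n ∧ x i1 ≤ 1 ∧ ∀ j ∈ Finset.Icc 1 n, x j ≤ 1 → j ≤ i1)
    (Δ0 Δ1 Δ : ℝ)
    (hΔ0 : Δ0 = if 1 < i0 ∧ -x (i0 - 1) < x i0 then x i0 - x (i0 - 1) else 2 * x i0)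
    (hΔ1 : Δ1 = if i1 < n ∧ x (i1 + 1) - 1 < 1 - x i1 then x (i1 + 1) - x i1
      else 2 * (1 - x i1))
    (hΔub : Δ0 ≤ Δ ∧ Δ1 ≤ Δ ∧ ∀ i, i0 ≤ i → i < i1 → x (i+1) - x i ≤ Δ)
    (hΔmem : Δ = Δ0 ∨ Δ = Δ1 ∨ ∃ i, i0 ≤ i ∧ i < i1 ∧ Δ = x (i+1) - x i) :
    UnitRadLifetime n x (fun _ => Δ / 2) (2 / Δ) ∧
    ∀ ρ : ℕ → ℝ, (∀ i ∈ Finset.Icc 1 n, 0 ≤ ρ i) →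
      ∀ T : ℝ, UnitRadLifetime n x ρ T → T ≤ 2 / Δ := by
  obtain ⟨hi0m, hi0x, hi0min⟩ := hi0
  obtain ⟨hi1m, hi1x, hi1max⟩ := hi1
  obtain ⟨hub0, hub1, hubi⟩ := hΔub
  obtain ⟨j, hj, hj0, hj1⟩ := hone
  have h01 : i0 ≤ i1 := (hi0min j hj hj0).trans (hi1max j hj hj1)
  have hi0m' := hi0m
  have hi1m' := hi1m
  rw [Finset.mem_Icc] at hi0m' hi1m'
  have hx01 : x i0 ≤ x i1 := sensors_monotone hmono hi0m'.1 h01 hi1m'.2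
  have hneg : 1 < i0 → x (i0 - 1) < 0 := by
    intro h
    by_contra! hc
    have := hi0min (i0 - 1) (by rw [Finset.mem_Icc]; omega) hc
    omega
  have hbig : i1 < n → 1 < x (i1 + 1) := by
    intro h
    by_contra! hc
    have := hi1max (i1 + 1) (by rw [Finset.mem_Icc]; omega) hc
    omega
  have hΔpos : 0 < Δ := by
    by_contra! hc
    have hz0 : x i0 ≤ 0 := by
      split_ifs at hΔ0 with h
      · linarith [hneg h.1]
      · linarith
    have hz1 : 1 ≤ x i1 := by
      split_ifs at hΔ1 with h
      · linarith [hbig h.1]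
      · linarith
    -- All gaps are nonpositive, so `x` cannot increase from `x i0 ≤ 0` to `x i1 ≥ 1`.
    have hle : ∀ k, i0 ≤ k → k ≤ i1 → x k ≤ x i0 := by
      intro k hk
      induction k, hk using Nat.le_induction with
      | base => intro _; exact le_rfl
      | succ k hk ih =>
        intro hk1
        linarith [ih (by omega), hubi k hk (by omega)]
    linarith [hle i1 h01 le_rfl]
  constructor
  · intro u hu
    suffices h : ∃ i ∈ Finset.Icc 1 n, |u - x i| ≤ Δ / 2 by
      obtain ⟨i, hi, h⟩ := h
      exact ⟨i, hi, half_pos hΔpos, h, (one_div_div Δ 2).ge⟩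
    obtain ⟨hu0, hu1⟩ := hu
    rcases lt_or_ge u (x i0) with h | h
    · split_ifs at hΔ0 with hc
      · have := hneg hc.1
        rcases near_endpoint_of_gap_le (a := x (i0 - 1)) (b := x i0) (D := Δ)
          (by linarith) h.le (by linarith) with h' | h'
        · exact ⟨i0 - 1, by rw [Finset.mem_Icc]; omega, h'⟩
        · exact ⟨i0, hi0m, h'⟩
      · exact ⟨i0, hi0m, by rw [abs_le]; constructor <;> linarith⟩
    rcases lt_or_ge u (x i1) with h1 | h1
    · obtain ⟨i, ha, hb, hc, hd⟩ := exists_consecutive_between x u h01 h h1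
      rcases near_endpoint_of_gap_le hc hd (hubi i ha hb) with h' | h'
      · exact ⟨i, by rw [Finset.mem_Icc]; omega, h'⟩
      · exact ⟨i + 1, by rw [Finset.mem_Icc]; omega, h'⟩
    · split_ifs at hΔ1 with hc
      · have := hbig hc.1
        rcases near_endpoint_of_gap_le (a := x i1) (b := x (i1 + 1)) (D := Δ)
          h1 (by linarith) (by linarith) with h' | h'
        · exact ⟨i1, hi1m, h'⟩
        · exact ⟨i1 + 1, by rw [Finset.mem_Icc]; omega, h'⟩
      · exact ⟨i1, hi1m, by rw [abs_le]; constructor <;> linarith⟩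
  · intro ρ _ T hT
    suffices h : ∃ u ∈ Set.Icc (0:ℝ) 1, ∀ i ∈ Finset.Icc 1 n, Δ / 2 ≤ |u - x i| by
      obtain ⟨u, hu, h⟩ := h
      obtain ⟨i, hi, _, hcov, hTi⟩ := hT u hu
      calc T ≤ 1 / ρ i := hTi
        _ ≤ 1 / (Δ / 2) := one_div_le_one_div_of_le (half_pos hΔpos) ((h i hi).trans hcov)
        _ = 2 / Δ := one_div_div Δ 2
    rcases hΔmem with h | h | ⟨k, hk0, hk1, h⟩
    · split_ifs at hΔ0 with hc
      · have hn := hneg hc.1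
        have hs : i0 - 1 + 1 = i0 := by omega
        have hg := half_gap_le_dist hmono (k := i0 - 1) (by omega) (by omega)
        rw [hs] at hg
        refine ⟨(x i0 + x (i0 - 1)) / 2, ⟨by linarith, by linarith⟩, ?_⟩
        rwa [h, hΔ0]
      · refine ⟨0, ⟨le_rfl, zero_le_one⟩, fun i hi => ?_⟩
        rw [Finset.mem_Icc] at hi
        rcases le_or_gt i0 i with hii | hii
        · have := sensors_monotone hmono hi0m'.1 hii hi.2
          exact le_trans (by linarith) (neg_le_abs _)
        · have hl : x i0 ≤ -x (i0 - 1) := by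
            by_contra! hlt
            exact hc ⟨by omega, hlt⟩
          have := sensors_monotone hmono hi.1 (by omega : i ≤ i0 - 1) (by omega)
          exact le_trans (by linarith) (le_abs_self _)
    · split_ifs at hΔ1 with hc
      · have hb := hbig hc.1
        refine ⟨(x (i1 + 1) + x i1) / 2, ⟨by linarith, by linarith⟩, ?_⟩
        rw [h, hΔ1]
        exact half_gap_le_dist hmono hi1m'.1 hc.1
      · refine ⟨1, ⟨zero_le_one, le_rfl⟩, fun i hi => ?_⟩
        rw [Finset.mem_Icc] at hi
        rcases le_or_gt i i1 with hii | hii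
        · have := sensors_monotone hmono hi.1 hii hi1m'.2
          exact le_trans (by linarith) (le_abs_self _)
        · have hl : 1 - x i1 ≤ x (i1 + 1) - 1 := by
            by_contra! hlt
            exact hc ⟨by omega, hlt⟩
          have := sensors_monotone hmono (by omega : 1 ≤ i1 + 1) hii hi.2
          exact le_trans (by linarith) (neg_le_abs _)
    · have ha := sensors_monotone hmono hi0m'.1 hk0 (by omega)
      have hb := sensors_monotone hmono (by omega : 1 ≤ k + 1) hk1 hi1m'.2
      have hm := hmono k (by omega) (by omega)
      refine ⟨(x (k + 1) + x k) / 2, ⟨by linarith, by linarith⟩, ?_⟩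
      rw [h]
      exact half_gap_le_dist hmono (by omega) (by omega)
end

section
/- Let x_1 ≤ … ≤ x_n be a unit-battery instance with at least one x_i ∈ [0,1], with Δ as defined below, and assume every consecutive gap satisfies x_{i+1} − x_i ≤ Δ for all 1 ≤ i < n. Then RR'(x,1) ≥ (2/3)·(2/Δ); that is, n / ((1/n)·∑_i max(x_i, 1 − x_i)) ≥ (2/3)·(2/Δ), so RR' is at least two-thirds of the optimal RadSC lifetime of the instance. -/
/-- The left side is `⌊n²/2⌋`, the total distance between the indices and their mirrors. -/
lemma sum_abs_le : ∀ n : ℕ, ∑ k ∈ Finset.range n, |(n:ℝ) - 1 - 2 * k| ≤ (n:ℝ) ^ 2 / 2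
  | 0 => by simp
  | 1 => by norm_num
  | n + 2 => by
    have ih := sum_abs_le n
    rw [Finset.sum_range_succ, Finset.sum_range_succ']
    -- Dropping the first and the last index leaves the sum for `n`.
    have h : ∑ k ∈ Finset.range n, |((n + 2 : ℕ):ℝ) - 1 - 2 * ((k + 1 : ℕ):ℝ)|
        = ∑ k ∈ Finset.range n, |(n:ℝ) - 1 - 2 * k| := by
      refine Finset.sum_congr rfl fun k _ => ?_
      push_cast
      congr 1
      ring
    have hn : (0:ℝ) ≤ n := Nat.cast_nonneg n
    have h1 : |((n + 2 : ℕ):ℝ) - 1 - 2 * ((0 : ℕ):ℝ)| = n + 1 := by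
      push_cast
      rw [abs_of_nonneg] <;> linarith
    have h2 : |((n + 2 : ℕ):ℝ) - 1 - 2 * ((n + 1 : ℕ):ℝ)| = n + 1 := by
      push_cast
      rw [abs_of_nonpos] <;> linarith
    rw [h, h1, h2]
    push_cast
    nlinarith

lemma sum_Icc_eq_range (g : ℕ → ℝ) (n : ℕ) :
    ∑ i ∈ Finset.Icc 1 n, g i = ∑ k ∈ Finset.range n, g (k + 1) := by
  induction n with
  | zero => simp
  | succ n ih => rw [Finset.sum_Icc_succ_top (by omega), Finset.sum_range_succ, ih]

lemma diff_bounds {n : ℕ} {x : ℕ → ℝ} {Δ : ℝ}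
    (hmono : ∀ i, 1 ≤ i → i < n → x i ≤ x (i+1))
    (hgap : ∀ i, 1 ≤ i → i < n → x (i+1) - x i ≤ Δ)
    {p : ℕ} (hp : 1 ≤ p) {q : ℕ} (hpq : p ≤ q) (hq : q ≤ n) :
    x p ≤ x q ∧ x q - x p ≤ ((q:ℝ) - p) * Δ := by
  induction q, hpq using Nat.le_induction with
  | base => simp
  | succ q hpq ih =>
    obtain ⟨h1, h2⟩ := ih (by omega)
    have h3 := hmono q (by omega) (by omega)
    have h4 := hgap q (by omega) (by omega)
    refine ⟨by linarith, ?_⟩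
    push_cast
    linarith

/-- Either `x i0` or, in the first case of the definition of `Δ0`, the negative location
`x (i0 - 1)` is at most `Δ/2`. -/
lemma first_le {n : ℕ} {x : ℕ → ℝ} {Δ0 Δ : ℝ} {i0 : ℕ}
    (hle : ∀ q, 1 ≤ q → q ≤ n → x 1 ≤ x q)
    (hi0 : i0 ∈ Finset.Icc 1 n ∧ 0 ≤ x i0 ∧ ∀ j ∈ Finset.Icc 1 n, 0 ≤ x j → i0 ≤ j)
    (hΔ0 : Δ0 = if 1 < i0 ∧ -x (i0 - 1) < x i0 then x i0 - x (i0 - 1) else 2 * x i0)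
    (h : Δ0 ≤ Δ) : x 1 ≤ Δ / 2 := by
  obtain ⟨hm, h0, hmin⟩ := hi0
  rw [Finset.mem_Icc] at hm
  split_ifs at hΔ0 with hc
  · have hneg : x (i0 - 1) < 0 := by
      by_contra! hcon
      have := hmin (i0 - 1) (Finset.mem_Icc.2 ⟨by omega, by omega⟩) hcon
      omega
    have := hle (i0 - 1) (by omega) (by omega)
    linarith
  · have := hle i0 hm.1 hm.2
    linarith

/-- The mirror image of `first_le` at the right end of `[0,1]`. -/
lemma last_ge {n : ℕ} {x : ℕ → ℝ} {Δ1 Δ : ℝ} {i1 : ℕ}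
    (hle : ∀ q, 1 ≤ q → q ≤ n → x q ≤ x n)
    (hi1 : i1 ∈ Finset.Icc 1 n ∧ x i1 ≤ 1 ∧ ∀ j ∈ Finset.Icc 1 n, x j ≤ 1 → j ≤ i1)
    (hΔ1 : Δ1 = if i1 < n ∧ x (i1 + 1) - 1 < 1 - x i1 then x (i1 + 1) - x i1
      else 2 * (1 - x i1))
    (h : Δ1 ≤ Δ) : 1 - Δ / 2 ≤ x n := by
  obtain ⟨hm, h0, hmax⟩ := hi1
  rw [Finset.mem_Icc] at hm
  split_ifs at hΔ1 with hc
  · have hgt : 1 < x (i1 + 1) := by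
      by_contra! hcon
      have := hmax (i1 + 1) (Finset.mem_Icc.2 ⟨by omega, by omega⟩) hcon
      omega
    have := hle (i1 + 1) (by omega) (by omega)
    linarith
  · have := hle i1 hm.1 hm.2
    linarith

/-- The bound on the contribution of a sensor together with its mirror `j = n + 1 - i`. -/
lemma pair_le {n : ℕ} {x : ℕ → ℝ} {Δ : ℝ}
    (hmono : ∀ i, 1 ≤ i → i < n → x i ≤ x (i+1))
    (hgap : ∀ i, 1 ≤ i → i < n → x (i+1) - x i ≤ Δ)
    (hfirst : x 1 ≤ Δ / 2) (hlast : 1 - Δ / 2 ≤ x n) (hΔ : 0 ≤ Δ) (hn : 1 ≤ n * Δ)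
    {i j : ℕ} (hi : 1 ≤ i) (hj : 1 ≤ j) (hij : i + j = n + 1) :
    max (x i) (1 - x i) + max (x j) (1 - x j) ≤ (n + |(j:ℝ) - i|) * Δ := by
  have hij' : (i:ℝ) + j = n + 1 := by exact_mod_cast hij
  obtain ⟨-, ui⟩ := diff_bounds hmono hgap le_rfl hi (by omega)
  obtain ⟨-, uj⟩ := diff_bounds hmono hgap le_rfl hj (by omega)
  obtain ⟨-, li⟩ := diff_bounds hmono hgap hi (show i ≤ n by omega) le_rfl
  obtain ⟨-, lj⟩ := diff_bounds hmono hgap hj (show j ≤ n by omega) le_rfl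
  push_cast at ui uj
  have hd : |x j - x i| ≤ |(j:ℝ) - i| * Δ := by
    rcases le_total i j with h | h
    · obtain ⟨h1, h2⟩ := diff_bounds hmono hgap hi h (by omega)
      rw [abs_of_nonneg (by linarith)]
      exact h2.trans (mul_le_mul_of_nonneg_right (le_abs_self _) hΔ)
    · obtain ⟨h1, h2⟩ := diff_bounds hmono hgap hj h (by omega)
      rw [abs_sub_comm, abs_of_nonneg (by linarith), abs_sub_comm (j:ℝ)]
      exact h2.trans (mul_le_mul_of_nonneg_right (le_abs_self _) hΔ)
  have hd' := abs_le.1 hd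
  have hnn : 0 ≤ |(j:ℝ) - i| * Δ := mul_nonneg (abs_nonneg _) hΔ
  have hs : (i:ℝ) * Δ + j * Δ = n * Δ + Δ := by rw [← add_mul, hij']; ring
  rcases max_cases (x i) (1 - x i) with ⟨e1, -⟩ | ⟨e1, -⟩ <;>
  rcases max_cases (x j) (1 - x j) with ⟨e2, -⟩ | ⟨e2, -⟩ <;>
  · rw [e1, e2]
    linarith [hd'.1, hd'.2]

/-- For a unit-battery instance whose consecutive gaps are all at most `Δ`,
`RR'(x,1) = n² / ∑ max (x i) (1 - x i)` is at least two-thirds of the optimal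
RadSC lifetime `2/Δ`. -/
theorem rr'_ge_two_thirds_opt
    (n : ℕ) (x : ℕ → ℝ)
    (hmono : ∀ i, 1 ≤ i → i < n → x i ≤ x (i+1))
    (hone : ∃ j ∈ Finset.Icc 1 n, x j ∈ Set.Icc (0:ℝ) 1)
    (i0 i1 : ℕ)
    (hi0 : i0 ∈ Finset.Icc 1 n ∧ 0 ≤ x i0 ∧ ∀ j ∈ Finset.Icc 1 n, 0 ≤ x j → i0 ≤ j)
    (hi1 : i1 ∈ Finset.Icc 1 n ∧ x i1 ≤ 1 ∧ ∀ j ∈ Finset.Icc 1 n, x j ≤ 1 → j ≤ i1)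
    (Δ0 Δ1 Δ : ℝ)
    (hΔ0 : Δ0 = if 1 < i0 ∧ -x (i0 - 1) < x i0 then x i0 - x (i0 - 1) else 2 * x i0)
    (hΔ1 : Δ1 = if i1 < n ∧ x (i1 + 1) - 1 < 1 - x i1 then x (i1 + 1) - x i1
      else 2 * (1 - x i1))
    (hΔub : Δ0 ≤ Δ ∧ Δ1 ≤ Δ ∧ ∀ i, i0 ≤ i → i < i1 → x (i+1) - x i ≤ Δ)
    (hΔmem : Δ = Δ0 ∨ Δ = Δ1 ∨ ∃ i, i0 ≤ i ∧ i < i1 ∧ Δ = x (i+1) - x i)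
    (hgap : ∀ i, 1 ≤ i → i < n → x (i+1) - x i ≤ Δ) :
    (n:ℝ) ^ 2 / (∑ i ∈ Finset.Icc 1 n, max (x i) (1 - x i)) ≥ (2/3) * (2/Δ) := by
  obtain ⟨j, hj, -⟩ := hone
  have hn1 : 1 ≤ n := (Finset.mem_Icc.1 hj).1.trans (Finset.mem_Icc.1 hj).2
  have hfirst : x 1 ≤ Δ / 2 :=
    first_le (fun q h1 h2 => (diff_bounds hmono hgap le_rfl h1 h2).1) hi0 hΔ0 hΔub.1
  have hlast : 1 - Δ / 2 ≤ x n :=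
    last_ge (fun q h1 h2 => (diff_bounds hmono hgap h1 h2 le_rfl).1) hi1 hΔ1 hΔub.2.1
  have hn : 1 ≤ n * Δ := by
    have := (diff_bounds hmono hgap le_rfl hn1 le_rfl).2
    push_cast at this
    linarith
  have hnpos : (0:ℝ) < n := by exact_mod_cast hn1
  have hΔ : 0 < Δ := by
    by_contra! h
    nlinarith
  rw [sum_Icc_eq_range (fun i => max (x i) (1 - x i))]
  set S := ∑ k ∈ Finset.range n, max (x (k + 1)) (1 - x (k + 1)) with hS
  have hSpos : 0 < S := by
    refine Finset.sum_pos (fun k _ => ?_) ⟨0, Finset.mem_range.2 hn1⟩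
    rcases lt_or_ge 0 (x (k + 1)) with h | h
    · exact lt_max_of_lt_left h
    · exact lt_max_of_lt_right (by linarith)
  have h2S : S + S ≤ ∑ k ∈ Finset.range n, (n + |(n:ℝ) - 1 - 2 * k|) * Δ := by
    -- Reversing one copy of `S` matches each sensor with its mirror.
    have hr := Finset.sum_range_reflect (fun k => max (x (k + 1)) (1 - x (k + 1))) n
    calc S + S = ∑ k ∈ Finset.range n, (max (x (k + 1)) (1 - x (k + 1)) +
          max (x (n - 1 - k + 1)) (1 - x (n - 1 - k + 1))) := by
          rw [Finset.sum_add_distrib, hr]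
      _ ≤ _ := by
          refine Finset.sum_le_sum fun k hk => ?_
          rw [Finset.mem_range] at hk
          have h := pair_le hmono hgap hfirst hlast hΔ.le hn (i := k + 1) (j := n - 1 - k + 1)
            (by omega) (by omega) (by omega)
          have hc : ((n - 1 - k + 1 : ℕ):ℝ) - ((k + 1 : ℕ):ℝ) = (n:ℝ) - 1 - 2 * k := by
            have : n - 1 - k + 1 = n - k := by omega
            rw [this, Nat.cast_sub hk.le]
            push_cast
            ring
          rwa [hc] at h
  rw [← Finset.sum_mul, Finset.sum_add_distrib, Finset.sum_const, Finset.card_range,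
    nsmul_eq_mul] at h2S
  have hA := mul_le_mul_of_nonneg_right (sum_abs_le n) hΔ.le
  have key : 4 * S ≤ 3 * Δ * (n:ℝ) ^ 2 := by nlinarith
  rw [ge_iff_le, div_mul_div_comm, div_le_div_iff₀ (by positivity) hSpos]
  linarith
end

section
/- Let (x,b) be a RadSC instance with x_1 ≤ … ≤ x_n ∈ [0,1] and positive rational batteries b_i, and suppose ρ is an assignment with lifetime T > 0 such that: ρ_i = b_i/T > 0 for every i; for every sensor i there is a point u_i ∈ [0,1] with |u_i − x_i| ≤ ρ_i and |u_i − x_k| > ρ_k for all k ≠ i (no sensor is superfluous); either ρ_1 = x_1 or no point of [0, x_1+ρ_1) is covered by a sensor other than sensor 1; and either ρ_n = 1 − x_n or no point of (x_n − ρ_n, 1] is covered by a sensor other than sensor n. Then RR'(x,b) := (∑_i b_i)²/∑_i b_i·max(x_i, 1−x_i) ≥ (2/3)·T. -/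
/-!
Write `ρ i = b i / T`, `r u = max u (1 - u)`, `R = ∑ ρ i`. After dividing by `T`, the claim is
`(2/3) ∑ ρ i * r (x i) ≤ R ^ 2`, and it holds whenever the intervals `[x i - ρ i, x i + ρ i]`
with centres in `[0,1]` cover `[0,1]`.

If some `ρ i > 1`, then `R > 1`, and `r ≤ 1` gives `∑ ρ i * r (x i) ≤ R ≤ R ^ 2`. Otherwise weigh
`[0,1]` with the nonnegative concave tent density `h u = 3/2 - r u`, of total mass `3/4`.
By concavity, together with `ρ i ≤ 1` to control the part sticking out of `[0,1]`, the interval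
of sensor `i` has mass at most `2 * ρ i * h (x i)` (`tent_mass_le`). Subadditivity over the cover
then yields `3/4 ≤ ∑ 2 * ρ i * (3/2 - r (x i)) = 3 R - 2 ∑ ρ i * r (x i)` (`cover_bound`),
so `(2/3) ∑ ρ i * r (x i) ≤ R - 1/4 ≤ R ^ 2`.
-/

open MeasureTheory

/-- The tent density `3/2 - max u (1 - u)`; its constant `3/2` is chosen so that the tangent line
`R - 1/4` of `R ^ 2` at `R = 1/2` appears at the end. -/
noncomputable def tent (u : ℝ) : ℝ := 3/2 - max u (1 - u)

lemma tent_continuous : Continuous tent := by unfold tent; fun_prop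

lemma tent_nonneg {u : ℝ} (hu : u ∈ Set.Icc (0:ℝ) 1) : 0 ≤ tent u := by
  have : max u (1 - u) ≤ 1 := max_le hu.2 (by linarith [hu.1])
  unfold tent; linarith

lemma tent_total : ∫ u in Set.Icc (0:ℝ) 1, tent u = 3/4 := by
  rw [integral_Icc_eq_integral_Ioc, ← intervalIntegral.integral_of_le zero_le_one,
    ← intervalIntegral.integral_add_adjacent_intervals (b := 1/2)
      (tent_continuous.intervalIntegrable _ _) (tent_continuous.intervalIntegrable _ _)]
  have h1 : ∫ u in (0:ℝ)..(1/2), tent u = ∫ u in (0:ℝ)..(1/2), (1/2 + u) := by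
    refine intervalIntegral.integral_congr fun u hu => ?_
    rw [Set.uIcc_of_le (by norm_num)] at hu
    simp only [tent]
    rw [max_eq_right (by linarith [hu.2])]; ring
  have h2 : ∫ u in (1/2:ℝ)..1, tent u = ∫ u in (1/2:ℝ)..1, (3/2 - u) := by
    refine intervalIntegral.integral_congr fun u hu => ?_
    rw [Set.uIcc_of_le (by norm_num)] at hu
    simp only [tent]
    rw [max_eq_left (by linarith [hu.1])]
  rw [h1, h2, intervalIntegral.integral_add (by simp) (by simp),
    intervalIntegral.integral_sub (by simp) (by simp)]
  simp only [intervalIntegral.integral_const, integral_id, smul_eq_mul]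
  norm_num

/-- The tent mass of `[x - p, x + p] ∩ [0,1]` is at most the length `2 * p` times the value of the
tent at the centre. -/
lemma tent_mass_le {x p : ℝ} (hx : x ∈ Set.Icc (0:ℝ) 1) (hp : 0 < p) (hp1 : p ≤ 1) :
    ∫ u in Set.Icc (0:ℝ) 1 ∩ Set.Icc (x - p) (x + p), tent u ≤ 2 * p * tent x := by
  obtain ⟨hx0, hx1⟩ := hx
  rw [Set.Icc_inter_Icc]
  set a := max 0 (x - p) with ha
  set c := min 1 (x + p) with hc
  have hac : a ≤ c := max_le (le_min (by norm_num) (by linarith))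
    (le_min (by linarith) (by linarith))
  have ha0 : 0 ≤ a := le_max_left _ _
  have hc1 : c ≤ 1 := min_le_left _ _
  rw [integral_Icc_eq_integral_Ioc, ← intervalIntegral.integral_of_le hac]
  -- The tent lies below the line that agrees with it at `x`, so it suffices to integrate the line.
  rcases le_total (1 - x) x with h | h
  · have hle : ∫ u in a..c, tent u ≤ ∫ u in a..c, (3/2 - u) := by
      refine intervalIntegral.integral_mono_on hac (tent_continuous.intervalIntegrable _ _)
        (Continuous.intervalIntegrable (by fun_prop) _ _) fun u _ => ?_
      unfold tent; linarith [le_max_left u (1 - u)]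
    rw [intervalIntegral.integral_sub (by simp) (by simp)] at hle
    simp only [intervalIntegral.integral_const, integral_id, smul_eq_mul] at hle
    refine hle.trans ?_
    rw [tent, max_eq_left h]
    rcases max_cases 0 (x - p) with ⟨e1, _⟩ | ⟨e1, _⟩ <;>
      rcases min_cases 1 (x + p) with ⟨e2, _⟩ | ⟨e2, _⟩ <;>
      rw [ha, hc, e1, e2] <;> nlinarith
  · have hle : ∫ u in a..c, tent u ≤ ∫ u in a..c, (1/2 + u) := by
      refine intervalIntegral.integral_mono_on hac (tent_continuous.intervalIntegrable _ _)
        (Continuous.intervalIntegrable (by fun_prop) _ _) fun u _ => ?_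
      unfold tent; linarith [le_max_right u (1 - u)]
    rw [intervalIntegral.integral_add (by simp) (by simp)] at hle
    simp only [intervalIntegral.integral_const, integral_id, smul_eq_mul] at hle
    refine hle.trans ?_
    rw [tent, max_eq_right h]
    rcases max_cases 0 (x - p) with ⟨e1, _⟩ | ⟨e1, _⟩ <;>
      rcases min_cases 1 (x + p) with ⟨e2, _⟩ | ⟨e2, _⟩ <;>
      rw [ha, hc, e1, e2] <;> nlinarith

lemma cover_bound {ι : Type*} (s : Finset ι) (x p : ι → ℝ)
    (hx : ∀ i ∈ s, x i ∈ Set.Icc (0:ℝ) 1) (hp : ∀ i ∈ s, 0 < p i) (hp1 : ∀ i ∈ s, p i ≤ 1)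
    (hcov : ∀ u ∈ Set.Icc (0:ℝ) 1, ∃ i ∈ s, |u - x i| ≤ p i) :
    3/4 ≤ ∑ i ∈ s, 2 * p i * tent (x i) := by
  have hint : IntegrableOn tent (Set.Icc (0:ℝ) 1) :=
    tent_continuous.continuousOn.integrableOn_Icc
  have hind : ∀ i ∈ s, Integrable ((Set.Icc (x i - p i) (x i + p i)).indicator tent)
      (volume.restrict (Set.Icc (0:ℝ) 1)) := fun i _ => hint.indicator measurableSet_Icc
  calc (3/4 : ℝ) = ∫ u in Set.Icc (0:ℝ) 1, tent u := tent_total.symm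
    _ ≤ ∫ u in Set.Icc (0:ℝ) 1,
          ∑ i ∈ s, (Set.Icc (x i - p i) (x i + p i)).indicator tent u := by
        refine setIntegral_mono_on hint (integrable_finsetSum s hind) measurableSet_Icc
          fun u hu => ?_
        obtain ⟨i, hi, hui⟩ := hcov u hu
        rw [abs_le] at hui
        have hmem : u ∈ Set.Icc (x i - p i) (x i + p i) :=
          ⟨by linarith [hui.1], by linarith [hui.2]⟩
        have h := Finset.single_le_sum
          (f := fun j => (Set.Icc (x j - p j) (x j + p j)).indicator tent u)
          (fun j _ => Set.indicator_apply_nonneg fun _ => tent_nonneg hu) hi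
        simpa only [Set.indicator_of_mem hmem] using h
    _ = ∑ i ∈ s, ∫ u in Set.Icc (0:ℝ) 1,
          (Set.Icc (x i - p i) (x i + p i)).indicator tent u := integral_finsetSum s hind
    _ ≤ ∑ i ∈ s, 2 * p i * tent (x i) := by
        refine Finset.sum_le_sum fun i hi => ?_
        rw [setIntegral_indicator measurableSet_Icc]
        exact tent_mass_le (hx i hi) (hp i hi) (hp1 i hi)

/-- The bound for radii: the lifetime factor `T` cancels from the original inequality. -/
lemma radii_bound {ι : Type*} (s : Finset ι) (x p : ι → ℝ)
    (hx : ∀ i ∈ s, x i ∈ Set.Icc (0:ℝ) 1) (hp : ∀ i ∈ s, 0 < p i)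
    (hcov : ∀ u ∈ Set.Icc (0:ℝ) 1, ∃ i ∈ s, |u - x i| ≤ p i) :
    2/3 * ∑ i ∈ s, p i * max (x i) (1 - x i) ≤ (∑ i ∈ s, p i) ^ 2 := by
  by_cases hp1 : ∀ i ∈ s, p i ≤ 1
  · have h := cover_bound s x p hx hp hp1 hcov
    have e : ∑ i ∈ s, 2 * p i * tent (x i)
        = 3 * ∑ i ∈ s, p i - 2 * ∑ i ∈ s, p i * max (x i) (1 - x i) := by
      rw [Finset.mul_sum, Finset.mul_sum, ← Finset.sum_sub_distrib]
      refine Finset.sum_congr rfl fun i _ => ?_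
      unfold tent; ring
    nlinarith [sq_nonneg (∑ i ∈ s, p i - 1/2)]
  · push Not at hp1
    obtain ⟨i, hi, h1⟩ := hp1
    have hR : p i ≤ ∑ i ∈ s, p i := Finset.single_le_sum (fun j hj => (hp j hj).le) hi
    have hS : ∑ i ∈ s, p i * max (x i) (1 - x i) ≤ ∑ i ∈ s, p i :=
      Finset.sum_le_sum fun j hj => mul_le_of_le_one_right (hp j hj).le
        (max_le (hx j hj).2 (by linarith [(hx j hj).1]))
    nlinarith


/-- For a RadSC instance with positive rational batteries and an assignment of
lifetime `T > 0` in which every sensor has radius exactly `b i / T`, no sensor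
is superfluous, and the boundary sensors are trimmed (either `ρ 1 = x 1` or no
point of `[0, x 1 + ρ 1)` is covered by another sensor, and symmetrically on
the right), the RoundRobin lower bound `RR'(x,b) = (∑ b i)² / ∑ b i · r i`
is at least `(2/3) · T`. -/
theorem rr'_ge_two_thirds_strip
    (n : ℕ) (x : ℕ → ℝ) (b : ℕ → ℚ) (ρ : ℕ → ℝ) (T : ℝ)
    (hmono : ∀ i, 1 ≤ i → i < n → x i ≤ x (i+1))
    (hx : ∀ i ∈ Finset.Icc 1 n, x i ∈ Set.Icc (0:ℝ) 1)
    (hb : ∀ i ∈ Finset.Icc 1 n, 0 < b i)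
    (hT : 0 < T)
    (hρ : ∀ i ∈ Finset.Icc 1 n, ρ i = (b i : ℝ) / T)
    (hlife : ∀ u ∈ Set.Icc (0:ℝ) 1, ∃ i ∈ Finset.Icc 1 n,
      0 < ρ i ∧ |u - x i| ≤ ρ i ∧ T ≤ (b i : ℝ) / ρ i)
    (hproper : ∀ i ∈ Finset.Icc 1 n, ∃ u ∈ Set.Icc (0:ℝ) 1, |u - x i| ≤ ρ i ∧
      ∀ k ∈ Finset.Icc 1 n, k ≠ i → ρ k < |u - x k|)
    (hleft : ρ 1 = x 1 ∨ ∀ u, 0 ≤ u → u < x 1 + ρ 1 →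
      ∀ k ∈ Finset.Icc 1 n, k ≠ 1 → ρ k < |u - x k|)
    (hright : ρ n = 1 - x n ∨ ∀ u, x n - ρ n < u → u ≤ 1 →
      ∀ k ∈ Finset.Icc 1 n, k ≠ n → ρ k < |u - x k|) :
    (∑ i ∈ Finset.Icc 1 n, (b i : ℝ)) ^ 2 /
        (∑ i ∈ Finset.Icc 1 n, (b i : ℝ) * max (x i) (1 - x i))
      ≥ (2/3) * T := by
  have hb' : ∀ i ∈ Finset.Icc 1 n, (b i : ℝ) = T * ρ i := fun i hi => by
    rw [hρ i hi]; field_simp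
  have hp : ∀ i ∈ Finset.Icc 1 n, 0 < ρ i := fun i hi => by
    rw [hρ i hi]; exact div_pos (by exact_mod_cast hb i hi) hT
  have hcov : ∀ u ∈ Set.Icc (0:ℝ) 1, ∃ i ∈ Finset.Icc 1 n, |u - x i| ≤ ρ i := fun u hu => by
    obtain ⟨i, hi, _, h, _⟩ := hlife u hu
    exact ⟨i, hi, h⟩
  have key := radii_bound _ x ρ hx hp hcov
  have hne : (Finset.Icc 1 n).Nonempty := by
    obtain ⟨i, hi, _⟩ := hcov 0 (by simp)
    exact ⟨i, hi⟩
  have hpos : 0 < ∑ i ∈ Finset.Icc 1 n, ρ i * max (x i) (1 - x i) := by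
    refine Finset.sum_pos (fun i hi => mul_pos (hp i hi) ?_) hne
    linarith [le_max_left (x i) (1 - x i), le_max_right (x i) (1 - x i)]
  have e1 : ∑ i ∈ Finset.Icc 1 n, (b i : ℝ) = T * ∑ i ∈ Finset.Icc 1 n, ρ i := by
    rw [Finset.mul_sum]; exact Finset.sum_congr rfl hb'
  have e2 : ∑ i ∈ Finset.Icc 1 n, (b i : ℝ) * max (x i) (1 - x i)
      = T * ∑ i ∈ Finset.Icc 1 n, ρ i * max (x i) (1 - x i) := by
    rw [Finset.mul_sum]
    exact Finset.sum_congr rfl fun i hi => by rw [hb' i hi]; ring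
  rw [e1, e2, ge_iff_le, le_div_iff₀ (mul_pos hT hpos)]
  nlinarith [mul_le_mul_of_nonneg_left key (sq_nonneg T)]
end

section
/- RoundRobin is a 3/2-approximation algorithm for Strip Cover: let x_1,…,x_n ∈ [0,1] and b_1,…,b_n > 0, and let ρ_i : [0,T] → [0,∞) be piecewise-constant functions (each with finitely many pieces) such that ∫_0^T ρ_i(t) dt ≤ b_i for every i and, for every t ∈ [0,T], [0,1] ⊆ ∪_{i : ρ_i(t) > 0} [x_i − ρ_i(t), x_i + ρ_i(t)]. Then ∑_{i=1}^n b_i / max(x_i, 1 − x_i) ≥ (2/3)·T. -/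
/-!
The idea is linear programming duality at a fixed time. Shift the strip so that it becomes
`[-1/2, 1/2]`; a sensor at `c` with radius `r` then contributes `r / (1/2 + |c|)` to the RoundRobin
sum. The increasing function `stripPotential v = 8 v / (9 + 6 |v|)` is a feasible dual solution: it
grows by at most `r / (1/2 + |c|)` over the part of `[c - r, c + r]` inside the strip
(`stripPotential_le_rate`), and by exactly `2/3` over the whole strip. Since a continuous monotone
map carries a cover of the strip to a cover of `[-1/3, 1/3]` by intervals, comparing lengths gives
`2/3 ≤ ∑ ρ i / max (x i) (1 - x i)` at each time (`static_cover_bound`). Integrating this over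
`[0, T]` and using the energy bounds gives the theorem.

The potential comes from asking for the cheapest cover of an initial segment `[0, s]` with `s ≤ 1/2`:
a single sensor at `s / 2` costs `s / (2 - s)`, and this function of `s`, recentred and
extended as an odd function about the midpoint of the strip, is `stripPotential`.
-/

/-- The dual potential on the strip recentred to `[-1/2, 1/2]`. -/
noncomputable def stripPotential (v : ℝ) : ℝ := 8 * v / (9 + 6 * |v|)

lemma continuous_stripPotential : Continuous stripPotential := by
  unfold stripPotential
  refine Continuous.div (by fun_prop) (by fun_prop) fun v => ?_
  positivity

lemma stripPotential_neg (v : ℝ) : stripPotential (-v) = -stripPotential v := by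
  simp [stripPotential, neg_div]

lemma stripPotential_mono : Monotone stripPotential := by
  intro v w h
  unfold stripPotential
  rw [div_le_div_iff₀ (by positivity) (by positivity)]
  rcases abs_cases v with ⟨hv, _⟩ | ⟨hv, _⟩ <;> rcases abs_cases w with ⟨hw, _⟩ | ⟨hw, _⟩ <;>
    rw [hv, hw] <;> nlinarith

/-- Dual feasibility for an interval inside the strip whose centre is in the right half. -/
lemma stripPotential_sub_le_of_nonneg {l u : ℝ} (hl : -(1/2) ≤ l) (hlu : l ≤ u) (hu : u ≤ 1/2)
    (h : 0 ≤ u + l) : stripPotential u - stripPotential l ≤ (u - l) / (1 + (u + l)) := by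
  have hu0 : 0 ≤ u := by linarith
  unfold stripPotential
  rw [abs_of_nonneg hu0]
  rcases le_total 0 l with h0 | h0
  · rw [abs_of_nonneg h0, div_sub_div _ _ (by positivity) (by positivity),
      div_le_div_iff₀ (by positivity) (by positivity)]
    -- The difference of the two sides is `9 (u - l) (1 - 2 u) (1 - 2 l)`.
    nlinarith [mul_nonneg (sub_nonneg.2 hlu)
      (mul_nonneg (by linarith : 0 ≤ 1 - 2 * u) (by linarith : 0 ≤ 1 - 2 * l))]
  · obtain ⟨a, rfl⟩ : ∃ a, l = -a := ⟨-l, by ring⟩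
    have ha : 0 ≤ a := by linarith
    rw [abs_neg, abs_of_nonneg ha, div_sub_div _ _ (by positivity) (by positivity),
      div_le_div_iff₀ (by positivity) (by linarith)]
    -- The difference of the two sides is
    -- `9 u (1 - 2 u) + 9 a (1 - 2 u) + 30 u a (1 - 2 u) + 126 a² + 132 u a²`.
    nlinarith [mul_nonneg hu0 (by linarith : 0 ≤ 1 - 2 * u),
      mul_nonneg ha (by linarith : 0 ≤ 1 - 2 * u),
      mul_nonneg (mul_nonneg hu0 ha) (by linarith : 0 ≤ 1 - 2 * u),
      mul_nonneg ha ha, mul_nonneg hu0 (mul_nonneg ha ha)]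

/-- Dual feasibility for a sensor in the right half of the strip. -/
lemma stripPotential_le_rate_of_nonneg {c r : ℝ} (hc : 0 ≤ c) (hc' : c ≤ 1/2) (hr : 0 ≤ r) :
    stripPotential (min (1/2) (c + r)) - stripPotential (max (-(1/2)) (c - r))
      ≤ r / (1/2 + c) := by
  have h1 : -(1/2) ≤ max (-(1/2)) (c - r) := le_max_left _ _
  have h2 : max (-(1/2)) (c - r) ≤ c := max_le (by linarith) (by linarith)
  have h3 : c ≤ min (1/2) (c + r) := le_min hc' (by linarith)
  have h4 : min (1/2) (c + r) ≤ 1/2 := min_le_left _ _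
  have h5 : 0 ≤ min (1/2) (c + r) + max (-(1/2)) (c - r) := by
    rcases min_cases (1/2) (c + r) with ⟨e, _⟩ | ⟨e, _⟩ <;>
      rcases max_cases (-(1/2)) (c - r) with ⟨e', _⟩ | ⟨e', _⟩ <;> rw [e, e'] <;> linarith
  refine (stripPotential_sub_le_of_nonneg h1 (h2.trans h3) h4 h5).trans ?_
  rw [div_le_div_iff₀ (by linarith) (by linarith)]
  rcases min_cases (1/2) (c + r) with ⟨e, _⟩ | ⟨e, _⟩ <;>
    rcases max_cases (-(1/2)) (c - r) with ⟨e', _⟩ | ⟨e', _⟩ <;> rw [e, e'] <;> nlinarith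

/-- Dual feasibility: over the part of the strip covered by a sensor at `c` with radius `r`, the
potential grows by at most the sensor's contribution to the RoundRobin sum. -/
lemma stripPotential_le_rate {c r : ℝ} (hc : |c| ≤ 1/2) (hr : 0 ≤ r) :
    stripPotential (min (1/2) (c + r)) - stripPotential (max (-(1/2)) (c - r))
      ≤ r / (1/2 + |c|) := by
  rcases le_total 0 c with h | h
  · rw [abs_of_nonneg h] at hc ⊢
    exact stripPotential_le_rate_of_nonneg h hc hr
  · rw [abs_of_nonpos h] at hc ⊢
    have key := stripPotential_le_rate_of_nonneg (neg_nonneg.2 h) hc hr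
    have e1 : min (1/2) (-c + r) = -max (-(1/2)) (c - r) := by
      rw [← min_neg_neg]; congr 1 <;> ring
    have e2 : max (-(1/2)) (-c - r) = -min (1/2) (c + r) := by
      rw [← max_neg_neg]; congr 1; ring
    rw [e1, e2, stripPotential_neg, stripPotential_neg] at key
    linarith

/-- The static bound: any radii covering `[0,1]` have total RoundRobin rate at least `2/3`. -/
lemma static_cover_bound (s : Finset ℕ) (x r : ℕ → ℝ) (hx : ∀ i ∈ s, x i ∈ Set.Icc (0:ℝ) 1)
    (hr : ∀ i ∈ s, 0 ≤ r i)
    (hcover : ∀ u ∈ Set.Icc (0:ℝ) 1, ∃ i ∈ s, |u - x i| ≤ r i) :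
    2/3 ≤ ∑ i ∈ s, r i / max (x i) (1 - x i) := by
  set lo : ℕ → ℝ := fun i => max (-(1/2)) (x i - 1/2 - r i) with hlo
  set hi : ℕ → ℝ := fun i => min (1/2) (x i - 1/2 + r i) with hhi
  have hmax : ∀ i, max (x i) (1 - x i) = 1/2 + |x i - 1/2| := by
    intro i
    rcases abs_cases (x i - 1/2) with ⟨e, _⟩ | ⟨e, _⟩ <;>
      rcases max_cases (x i) (1 - x i) with ⟨e', _⟩ | ⟨e', _⟩ <;> rw [e, e'] <;> linarith
  have hrate : ∀ i ∈ s, stripPotential (hi i) - stripPotential (lo i)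
      ≤ r i / max (x i) (1 - x i) := by
    intro i hi
    obtain ⟨h0, h1⟩ := hx i hi
    rw [hmax]
    exact stripPotential_le_rate (abs_le.2 ⟨by linarith, by linarith⟩) (hr i hi)
  have hsub : Set.Icc (-(1/3) : ℝ) (1/3)
      ⊆ ⋃ i ∈ s, Set.Icc (stripPotential (lo i)) (stripPotential (hi i)) := by
    intro y hy
    have e1 : stripPotential (1/2) = 1/3 := by
      unfold stripPotential; rw [abs_of_nonneg (by norm_num)]; norm_num
    have e2 : stripPotential (-(1/2)) = -(1/3) := by rw [stripPotential_neg, e1]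
    rw [← e2, ← e1] at hy
    obtain ⟨v, ⟨hv1, hv2⟩, rfl⟩ := intermediate_value_Icc (by norm_num)
      continuous_stripPotential.continuousOn hy
    obtain ⟨i, his, hi⟩ := hcover (v + 1/2) ⟨by linarith, by linarith⟩
    rw [abs_le] at hi
    simp only [Set.mem_iUnion]
    exact ⟨i, his, stripPotential_mono (max_le hv1 (by linarith)),
      stripPotential_mono (le_min hv2 (by linarith))⟩
  have hvol : ENNReal.ofReal (1/3 - -(1/3)) ≤ ENNReal.ofReal
      (∑ i ∈ s, r i / max (x i) (1 - x i)) := by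
    have hpos : ∀ i ∈ s, 0 ≤ r i / max (x i) (1 - x i) := fun i his =>
      div_nonneg (hr i his) (le_max_of_le_left (hx i his).1)
    rw [← Real.volume_Icc, ENNReal.ofReal_sum_of_nonneg hpos]
    refine (MeasureTheory.measure_mono hsub).trans
      ((MeasureTheory.measure_biUnion_finset_le _ _).trans (Finset.sum_le_sum fun i his => ?_))
    rw [Real.volume_Icc]
    exact ENNReal.ofReal_le_ofReal (hrate i his)
  have := (ENNReal.ofReal_le_ofReal_iff (Finset.sum_nonneg fun i his =>
      div_nonneg (hr i his) (le_max_of_le_left (hx i his).1))).1 hvol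
  linarith

/-- The piecewise-constancy hypothesis makes each radius function integrable, so that the energy
is a genuine integral. -/
lemma intervalIntegrable_of_piecewise {f : ℝ → ℝ} {T : ℝ}
    (h : ∃ (m : ℕ) (pt c : ℕ → ℝ),
      pt 0 = 0 ∧ pt m = T ∧ (∀ j < m, pt j < pt (j+1)) ∧
      ∀ j < m, ∀ t, pt j ≤ t → t < pt (j+1) → f t = c j) :
    IntervalIntegrable f MeasureTheory.volume 0 T := by
  obtain ⟨m, pt, c, h0, hm, hlt, hc⟩ := h
  rw [← h0, ← hm]
  refine IntervalIntegrable.trans_iterate fun j hj => ?_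
  rw [intervalIntegrable_iff_integrableOn_Ico_of_le (hlt j hj).le]
  exact (MeasureTheory.integrableOn_const (C := c j) (by simp)).congr_fun
    (fun t ht => (hc j hj t ht.1 ht.2).symm) measurableSet_Ico


/-- RoundRobin is a `3/2`-approximation for Strip Cover: if each sensor `i` has
a nonnegative piecewise-constant radius function `ρ i` on `[0,T]` consuming
energy `∫_0^T ρ i ≤ b i`, and `[0,1]` is covered at every time `t ∈ [0,T]`,
then the RoundRobin lifetime `∑ i, b i / max (x i) (1 - x i)` is at least
`(2/3) · T`. -/
theorem roundRobin_three_halves_approx_stripCover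
    (n : ℕ) (x b : ℕ → ℝ) (T : ℝ) (hT : 0 ≤ T)
    (hx : ∀ i ∈ Finset.Icc 1 n, x i ∈ Set.Icc (0:ℝ) 1)
    (hb : ∀ i ∈ Finset.Icc 1 n, 0 < b i)
    (ρ : ℕ → ℝ → ℝ)
    (hnonneg : ∀ i ∈ Finset.Icc 1 n, ∀ t, 0 ≤ ρ i t)
    (hpiecewise : ∀ i ∈ Finset.Icc 1 n, ∃ (m : ℕ) (pt c : ℕ → ℝ),
      pt 0 = 0 ∧ pt m = T ∧ (∀ j < m, pt j < pt (j+1)) ∧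
      ∀ j < m, ∀ t, pt j ≤ t → t < pt (j+1) → ρ i t = c j)
    (henergy : ∀ i ∈ Finset.Icc 1 n, (∫ t in (0:ℝ)..T, ρ i t) ≤ b i)
    (hcover : ∀ t ∈ Set.Icc (0:ℝ) T, ∀ u ∈ Set.Icc (0:ℝ) 1,
      ∃ i ∈ Finset.Icc 1 n, 0 < ρ i t ∧ |u - x i| ≤ ρ i t) :
    ∑ i ∈ Finset.Icc 1 n, b i / max (x i) (1 - x i) ≥ (2/3) * T := by
  have hM : ∀ i ∈ Finset.Icc 1 n, 0 ≤ max (x i) (1 - x i) := fun i hi =>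
    le_max_of_le_left (hx i hi).1
  have hint : ∀ i ∈ Finset.Icc 1 n,
      IntervalIntegrable (fun t => ρ i t / max (x i) (1 - x i)) MeasureTheory.volume 0 T :=
    fun i hi => (intervalIntegrable_of_piecewise (hpiecewise i hi)).div_const _
  have hstatic : ∀ t ∈ Set.Icc (0:ℝ) T,
      2/3 ≤ ∑ i ∈ Finset.Icc 1 n, ρ i t / max (x i) (1 - x i) := fun t ht =>
    static_cover_bound _ x (fun i => ρ i t) hx (fun i hi => hnonneg i hi t) fun u hu =>
      let ⟨i, hi, _, h⟩ := hcover t ht u hu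
      ⟨i, hi, h⟩
  calc (2/3) * T = ∫ _ in (0:ℝ)..T, (2/3 : ℝ) := by
        rw [intervalIntegral.integral_const, smul_eq_mul]; ring
    _ ≤ ∫ t in (0:ℝ)..T, ∑ i ∈ Finset.Icc 1 n, ρ i t / max (x i) (1 - x i) :=
        intervalIntegral.integral_mono_on hT (by simp)
          (by simpa only [Finset.sum_fn] using IntervalIntegrable.sum _ hint) hstatic
    _ = ∑ i ∈ Finset.Icc 1 n, (∫ t in (0:ℝ)..T, ρ i t) / max (x i) (1 - x i) := by
        rw [intervalIntegral.integral_finsetSum hint]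
        simp only [intervalIntegral.integral_div]
    _ ≤ ∑ i ∈ Finset.Icc 1 n, b i / max (x i) (1 - x i) :=
        Finset.sum_le_sum fun i hi => div_le_div_of_nonneg_right (henergy i hi) (hM i hi)
end

section
/- For the OnceSC instance with locations x = (1/4, 3/4, 3/4) and batteries b = (2, 1, 1): (a) there is a feasible schedule with lifetime 8 (namely ρ = (1/4, 1/4, 1/4), τ = (0, 0, 4)), which attains the maximum possible lifetime 2·∑_i b_i; and (b) for every partition of {1,2,3} into nonempty shifts, the sum over the shifts P of the optimal RadSC lifetime of the sub-instance (x_P, b_P) is at most 16/3. Hence no duty cycle algorithm achieves approximation ratio better than 3/2 on this instance. -/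
/-- Lifetime of sensor `i` when it covers `[0,1]` alone, with radius `3/4`. -/
noncomputable def soloLifetime (i : ℕ) : ℝ := if i = 1 then 8/3 else 4/3

lemma soloLifetime_nonneg (i : ℕ) : 0 ≤ soloLifetime i := by
  unfold soloLifetime; split_ifs <;> norm_num

/-- The battery bound `T ≤ b / r` together with a radius bound `c ≤ r`. -/
lemma lifetime_le_of_radius {T b c r : ℝ} (hb : 0 ≤ b) (hc : 0 < c) (hr : c ≤ r)
    (hT : T ≤ b / r) : T ≤ b / c :=
  hT.trans (div_le_div_of_nonneg_left hb hc hr)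

/-- The optimal lifetime of a shift is at most the sum of the solo lifetimes of its sensors. -/
lemma sSup_lifetime_le (s : Finset ℕ) :
    sSup {T : ℝ | ∃ ρ : ℕ → ℝ, (∀ i ∈ s, 0 ≤ ρ i) ∧
          ∀ u ∈ Set.Icc (0:ℝ) 1, ∃ i ∈ s, 0 < ρ i ∧
            |u - (if i = 1 then (1:ℝ)/4 else 3/4)| ≤ ρ i ∧
            T ≤ (if i = 1 then (2:ℝ) else 1) / ρ i} ≤ ∑ i ∈ s, soloLifetime i := by
  have single : ∀ i ∈ s, soloLifetime i ≤ ∑ i ∈ s, soloLifetime i := fun i hi =>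
    Finset.single_le_sum (fun j _ => soloLifetime_nonneg j) hi
  refine Real.sSup_le ?_ (Finset.sum_nonneg fun j _ => soloLifetime_nonneg j)
  rintro T ⟨ρ, -, h⟩
  obtain ⟨i, hi, -, hui, hTi⟩ := h 1 (by norm_num)
  have wi := single i hi
  by_cases hi1 : i = 1
  · simp only [soloLifetime, hi1, if_true] at hui hTi wi
    have := lifetime_le_of_radius (c := 3/4) (by norm_num) (by norm_num)
      (by linarith [le_abs_self ((1:ℝ) - 1/4)]) hTi
    unfold soloLifetime
    linarith
  · obtain ⟨j, hj, -, huj, hTj⟩ := h 0 (by norm_num)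
    have wj := single j hj
    rw [if_neg hi1] at hui hTi
    have h4 := lifetime_le_of_radius (c := 1/4) (by norm_num) (by norm_num)
      (by linarith [le_abs_self ((1:ℝ) - 3/4)]) hTi
    by_cases hj1 : j = 1
    · have hij : i ≠ j := fun e => hi1 (e.trans hj1)
      have hpair : ∑ k ∈ {i, j}, soloLifetime k ≤ ∑ k ∈ s, soloLifetime k :=
        Finset.sum_le_sum_of_subset_of_nonneg
          (by simp [Finset.insert_subset_iff, hi, hj]) (fun k _ _ => soloLifetime_nonneg k)
      rw [Finset.sum_pair hij] at hpair
      have e1 : soloLifetime i = 4/3 := if_neg hi1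
      have e2 : soloLifetime j = 8/3 := if_pos hj1
      linarith
    · rw [if_neg hj1] at huj hTj
      have := lifetime_le_of_radius (c := 3/4) (by norm_num) (by norm_num)
        (by linarith [neg_abs_le ((0:ℝ) - 3/4)]) hTj
      have e2 : soloLifetime j = 4/3 := if_neg hj1
      linarith

/-- For the instance `x = (1/4, 3/4, 3/4)`, `b = (2, 1, 1)`:
(a) the schedule `ρ = (1/4,1/4,1/4)`, `τ = (0,0,4)` is feasible with lifetime
`8 = 2·∑ b i`; and (b) for every partition of `{1,2,3}` into nonempty shifts,
the sum over the shifts of the optimal RadSC lifetime of the corresponding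
sub-instance is at most `16/3`.  Hence no duty cycle algorithm beats ratio `3/2`. -/
theorem duty_cycle_lower_bound :
    (IsLifetime 3 (fun i => if i = 1 then (1:ℝ)/4 else 3/4)
        (fun i => if i = 1 then (2:ℝ) else 1)
        (fun _ => (1:ℝ)/4) (fun i => if i = 3 then (4:ℝ) else 0) 8 ∧
      (8:ℝ) = 2 * ∑ i ∈ Finset.Icc 1 3, (if i = 1 then (2:ℝ) else 1)) ∧
    (∀ P : Finset (Finset ℕ),
      (∀ s ∈ P, s.Nonempty) →
      (∀ s ∈ P, ∀ t ∈ P, s ≠ t → Disjoint s t) →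
      P.biUnion id = Finset.Icc 1 3 →
      (∑ s ∈ P, sSup {T : ℝ | ∃ ρ : ℕ → ℝ, (∀ i ∈ s, 0 ≤ ρ i) ∧
          ∀ u ∈ Set.Icc (0:ℝ) 1, ∃ i ∈ s, 0 < ρ i ∧
            |u - (if i = 1 then (1:ℝ)/4 else 3/4)| ≤ ρ i ∧
            T ≤ (if i = 1 then (2:ℝ) else 1) / ρ i})
        ≤ 16/3) := by
  refine ⟨⟨?_, ?_⟩, ?_⟩
  · rintro u ⟨hu0, hu1⟩ t ⟨ht0, ht1⟩
    -- Sensor 1 serves the left half; sensors 2 and 3 serve the right half in turn.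
    rcases le_total u (1/2) with hu | hu
    · refine ⟨1, by simp, by norm_num, ?_, by simpa using ht0, by norm_num; linarith⟩
      simp only [if_true]
      rw [abs_le]; constructor <;> linarith
    · have hab : |u - 3/4| ≤ 1/4 := by rw [abs_le]; constructor <;> linarith
      rcases le_total t 4 with ht | ht
      · exact ⟨2, by simp, by norm_num, by simpa using hab, by simpa using ht0,
          by norm_num; linarith⟩
      · exact ⟨3, by simp, by norm_num, by simpa using hab, by simpa using ht,
          by norm_num; linarith⟩
  · norm_num [Finset.sum_Icc_succ_top]
  · intro P _ hdisj hcover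
    refine (Finset.sum_le_sum fun s _ => sSup_lifetime_le s).trans ?_
    have hsum := Finset.sum_biUnion (s := P) (t := id) (f := soloLifetime)
      (fun s hs t ht hst => hdisj s hs t ht hst)
    rw [hcover] at hsum
    simp only [id] at hsum
    rw [← hsum]
    norm_num [Finset.sum_Icc_succ_top, soloLifetime]
end

section
/- Every RadSC instance (x,b) with x_1 ≤ … ≤ x_n ∈ [0,1] and b_i > 0 has a proper optimal radius assignment: there exists an assignment ρ whose lifetime T equals the supremum of the lifetimes of all radius assignments, such that ρ_i ∈ {0, b_i/T} for every i, and for every i with ρ_i > 0 there exists a point u_i ∈ [0,1] with |u_i − x_i| ≤ ρ_i and |u_i − x_k| > ρ_k for every active k ≠ i. -/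
/-- A radius assignment `ρ` for the RadSC instance with sensors `1,…,n` at
locations `x` with batteries `b` has lifetime `T` if every `u ∈ [0,1]` is
covered by some sensor `i` with `0 < ρ i`, `|u - x i| ≤ ρ i`, and
`T ≤ b i / ρ i`. -/
def RadLifetime (n : ℕ) (x b ρ : ℕ → ℝ) (T : ℝ) : Prop :=
  ∀ u ∈ Set.Icc (0:ℝ) 1, ∃ i ∈ Finset.Icc 1 n, 0 < ρ i ∧ |u - x i| ≤ ρ i ∧ T ≤ b i / ρ i

/-!
Let `f u = min_i |u - x i| / b i`. Radii `b i * s` cover `[0,1]` exactly when `f ≤ s` on `[0,1]`, and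
a lifetime `T' > 0` forces `σ i ≤ b i / T'` for the sensors used, so the optimal lifetime is `1 / s`,
where `s` is the maximum of the continuous function `f` on the compact set `[0,1]`
(`exists_critical_scale`). It is positive because `f` vanishes only at the finitely many sensor
locations. Properness comes from activating only an inclusion-minimal set of sensors that still
covers `[0,1]` with the radii `b i * s` (`exists_minimal_cover`).
-/

/-- There is a smallest `s` for which the radii `b i * s` cover `[0,1]`: they do cover, while the
point `w`, where `min_i |w - x i| / b i` is maximal, is not covered with any smaller factor. -/
lemma exists_critical_scale (I : Finset ℕ) (hI : I.Nonempty) (x b : ℕ → ℝ)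
    (hb : ∀ i ∈ I, 0 < b i) :
    ∃ s : ℝ, 0 < s ∧ (∀ u ∈ Set.Icc (0:ℝ) 1, ∃ i ∈ I, |u - x i| ≤ b i * s) ∧
      ∃ w ∈ Set.Icc (0:ℝ) 1, ∀ i ∈ I, b i * s ≤ |w - x i| := by
  let f : ℝ → ℝ := fun u => I.inf' hI fun i => |u - x i| / b i
  have hf : Continuous f := Continuous.finset_inf'_apply hI fun i _ => by fun_prop
  obtain ⟨w, hw, hmax⟩ := isCompact_Icc.exists_isMaxOn
    (Set.nonempty_Icc.2 (zero_le_one (α := ℝ))) hf.continuousOn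
  refine ⟨f w, ?_, fun u hu => ?_, w, hw, fun i hi => ?_⟩
  · -- Some `v ∈ [0,1]` is not a sensor location, and `0 < f v ≤ f w`.
    obtain ⟨v, hv, hvx⟩ := (Set.Icc_infinite (zero_lt_one (α := ℝ))).exists_notMem_finset
      (I.image x)
    refine lt_of_lt_of_le ?_ (hmax hv)
    refine (Finset.lt_inf'_iff hI).2 fun i hi => div_pos (abs_pos.2 fun h => hvx ?_) (hb i hi)
    exact Finset.mem_image.2 ⟨i, hi, (sub_eq_zero.1 h).symm⟩
  · obtain ⟨i, hi, h⟩ := Finset.exists_mem_eq_inf' hI fun i => |u - x i| / b i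
    have h1 : |u - x i| / b i ≤ f w := h ▸ hmax hu
    exact ⟨i, hi, by rwa [div_le_iff₀' (hb i hi)] at h1⟩
  · have h1 : f w ≤ |w - x i| / b i := Finset.inf'_le _ hi
    rwa [le_div_iff₀' (hb i hi)] at h1

/-- A finite cover of `[0,1]` by closed intervals has a subcover each of whose members
contains a point of `[0,1]` lying in no other member. -/
lemma exists_minimal_cover (I : Finset ℕ) (x r : ℕ → ℝ)
    (hcov : ∀ u ∈ Set.Icc (0:ℝ) 1, ∃ i ∈ I, |u - x i| ≤ r i) :
    ∃ A ⊆ I, (∀ u ∈ Set.Icc (0:ℝ) 1, ∃ i ∈ A, |u - x i| ≤ r i) ∧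
      ∀ i ∈ A, ∃ u ∈ Set.Icc (0:ℝ) 1, |u - x i| ≤ r i ∧
        ∀ k ∈ A, k ≠ i → r k < |u - x k| := by
  obtain ⟨A, hAI, hA⟩ := exists_minimal_le_of_wellFoundedLT
    (fun A : Finset ℕ => ∀ u ∈ Set.Icc (0:ℝ) 1, ∃ i ∈ A, |u - x i| ≤ r i) I hcov
  refine ⟨A, hAI, hA.prop, fun i hi => ?_⟩
  have hnot := hA.not_prop_of_lt (Finset.erase_ssubset hi)
  push Not at hnot
  obtain ⟨u, hu, hun⟩ := hnot
  have hother : ∀ k ∈ A, k ≠ i → r k < |u - x k| := fun k hk hki =>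
    hun k (Finset.mem_erase.2 ⟨hki, hk⟩)
  obtain ⟨j, hj, hju⟩ := hA.prop u hu
  obtain rfl : j = i := by
    by_contra hji
    exact absurd hju (not_le.2 (hother j hj hji))
  exact ⟨u, hu, hju, hother⟩

/-- Every RadSC instance admits a proper optimal radius assignment: an
assignment `ρ` whose lifetime `T` is the supremum of all achievable lifetimes,
with `ρ i ∈ {0, b i / T}` for every sensor, and every active sensor covering
some point of `[0,1]` covered by no other active sensor. -/
theorem exists_proper_optimal_assignment
    (n : ℕ) (hn : 1 ≤ n) (x b : ℕ → ℝ)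
    (hmono : ∀ i, 1 ≤ i → i < n → x i ≤ x (i+1))
    (hx : ∀ i ∈ Finset.Icc 1 n, x i ∈ Set.Icc (0:ℝ) 1)
    (hb : ∀ i ∈ Finset.Icc 1 n, 0 < b i) :
    ∃ (T : ℝ) (ρ : ℕ → ℝ),
      T = sSup {T' : ℝ | ∃ σ : ℕ → ℝ, (∀ i ∈ Finset.Icc 1 n, 0 ≤ σ i) ∧
        RadLifetime n x b σ T'} ∧
      (∀ i ∈ Finset.Icc 1 n, 0 ≤ ρ i) ∧
      RadLifetime n x b ρ T ∧
      (∀ i ∈ Finset.Icc 1 n, ρ i = 0 ∨ ρ i = b i / T) ∧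
      (∀ i ∈ Finset.Icc 1 n, 0 < ρ i →
        ∃ u ∈ Set.Icc (0:ℝ) 1, |u - x i| ≤ ρ i ∧
          ∀ k ∈ Finset.Icc 1 n, k ≠ i → 0 < ρ k → ρ k < |u - x k|) := by
  classical
  obtain ⟨s, hs, hcov, w, hw, hfar⟩ := exists_critical_scale (Finset.Icc 1 n)
    (Finset.nonempty_Icc.2 hn) x b hb
  obtain ⟨A, hAI, hAcov, hApriv⟩ := exists_minimal_cover (Finset.Icc 1 n) x (fun i => b i * s) hcov
  let ρ : ℕ → ℝ := fun i => if i ∈ A then b i * s else 0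
  have hρA : ∀ i ∈ A, ρ i = b i * s := fun i hi => if_pos hi
  have hρN : ∀ i, i ∉ A → ρ i = 0 := fun i hi => if_neg hi
  have hpos : ∀ i ∈ A, 0 < b i * s := fun i hi => mul_pos (hb i (hAI hi)) hs
  have hact : ∀ i, 0 < ρ i → i ∈ A := fun i h => by
    by_contra hi
    exact h.ne' (hρN i hi)
  have hρ0 : ∀ i ∈ Finset.Icc 1 n, 0 ≤ ρ i := fun i _ => by
    by_cases hi : i ∈ A
    · exact (hρA i hi).symm ▸ (hpos i hi).le
    · exact (hρN i hi).ge
  have hlife : RadLifetime n x b ρ (1 / s) := fun u hu => by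
    obtain ⟨i, hi, h⟩ := hAcov u hu
    refine ⟨i, hAI hi, ?_, ?_, ?_⟩ <;> rw [hρA i hi]
    · exact hpos i hi
    · exact h
    · have := hb i (hAI hi)
      exact le_of_eq (by field_simp)
  have hgreatest : IsGreatest {T' : ℝ | ∃ σ : ℕ → ℝ, (∀ i ∈ Finset.Icc 1 n, 0 ≤ σ i) ∧
      RadLifetime n x b σ T'} (1 / s) := by
    refine ⟨⟨ρ, hρ0, hlife⟩, ?_⟩
    rintro T' ⟨σ, -, hσ⟩
    -- A sensor covering the extremal point `w` has radius at least `b i * s`.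
    obtain ⟨i, hi, hσi, hwi, hT⟩ := hσ w hw
    have hbi := hb i hi
    calc T' ≤ b i / σ i := hT
      _ ≤ b i / (b i * s) :=
        div_le_div_of_nonneg_left hbi.le (mul_pos hbi hs) ((hfar i hi).trans hwi)
      _ = 1 / s := by field_simp
  refine ⟨1 / s, ρ, hgreatest.csSup_eq.symm, hρ0, hlife, fun i _ => ?_, fun i _ hi => ?_⟩
  · by_cases hi : i ∈ A
    · exact Or.inr (by rw [hρA i hi, div_div_eq_mul_div, div_one])
    · exact Or.inl (hρN i hi)
  · obtain ⟨u, hu, hui, hk⟩ := hApriv i (hact i hi)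
    refine ⟨u, hu, (hρA i (hact i hi)).symm ▸ hui, fun k _ hki hkpos => ?_⟩
    rw [hρA k (hact k hkpos)]
    exact hk k (hact k hkpos) hki
end

section
/- Let (x,b) be a RadSC instance with x_1 ≤ … ≤ x_n ∈ [0,1] and b_i > 0, append dummy sensors x_0 = 0, b_0 = 0 and x_{n+1} = 1, b_{n+1} = 0, and let T > 0 be the optimal (maximum achievable) lifetime. Then there exist indices 0 ≤ i < k ≤ n+1 with x_i < x_k such that T = (b_i + b_k)/(x_k − x_i). -/
/-!
In a schedule of lifetime `T`, enlarging every radius to `b i / T` keeps the lifetime, so the closed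
intervals `{u | T * |u - x i| ≤ b i}` cover `[0,1]`. Suppose no pair satisfies the required equation,
that is, no right endpoint `x i + b i / T` (with `0` as the right endpoint of sensor `0`) equals a
left endpoint `x k - b k / T` (with `1` as the left endpoint of sensor `n+1`). Since the cover is
finite, each `u < 1` lies in an interval that extends to the right of `u`, and each `u > 0` in one
that extends to the left of `u` (`exists_extending_right`, `exists_extending_left`). If `u` were
interior to no interval, it would be both a left and a right endpoint, which is excluded.
Hence already the open intervals cover `[0,1]`, and by compactness there is slack `δ > 0`:
every `u` has a sensor with `T * |u - x i| + δ ≤ b i` (`exists_slack`). As `|u - x i| ≤ 1`, the radii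
`b i / (T + δ)` achieve lifetime `T + δ`, contradicting optimality.
-/

/-- In a finite closed cover, some interval contains `u` without ending there: otherwise all
intervals would miss the points slightly to the right of `u`. -/
lemma exists_extending_right (s : Finset ℕ) (x b : ℕ → ℝ) (T : ℝ)
    (hcov : ∀ u ∈ Set.Icc (0:ℝ) 1, ∃ i ∈ s, T * |u - x i| ≤ b i) (hT : 0 < T)
    (u : ℝ) (hu0 : 0 ≤ u) (hu1 : u < 1) :
    ∃ i ∈ s, -b i ≤ T * (u - x i) ∧ T * (u - x i) < b i := by
  by_contra! hcon
  have hmiss : ∀ i ∈ s, ∀ᶠ v in nhdsWithin u (Set.Ioi u), b i < T * |v - x i| := by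
    intro i hi
    rcases lt_or_ge (T * (u - x i)) (-b i) with h | h
    · have hev : ∀ᶠ v in nhds u, T * (v - x i) < -b i :=
        (show Continuous fun v => T * (v - x i) by fun_prop).continuousAt.eventually_lt_const h
      filter_upwards [hev.filter_mono nhdsWithin_le_nhds] with v hv
      nlinarith [neg_abs_le (v - x i)]
    · have hge := hcon i hi h
      filter_upwards [self_mem_nhdsWithin] with v hv
      have hv' : u < v := hv
      nlinarith [le_abs_self (v - x i)]
  have hall := (Filter.eventually_all_finset s).2 hmiss
  have hIoo : ∀ᶠ v in nhdsWithin u (Set.Ioi u), v ∈ Set.Ioo u 1 := Ioo_mem_nhdsGT hu1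
  obtain ⟨v, hv, hv1⟩ := (hall.and hIoo).exists
  obtain ⟨i, hi, hle⟩ := hcov v ⟨hu0.trans hv1.1.le, hv1.2.le⟩
  exact absurd hle (not_le.2 (hv i hi))

/-- The mirror image of `exists_extending_right` under `u ↦ 1 - u`. -/
lemma exists_extending_left (s : Finset ℕ) (x b : ℕ → ℝ) (T : ℝ)
    (hcov : ∀ u ∈ Set.Icc (0:ℝ) 1, ∃ i ∈ s, T * |u - x i| ≤ b i) (hT : 0 < T)
    (u : ℝ) (hu0 : 0 < u) (hu1 : u ≤ 1) :
    ∃ i ∈ s, -b i < T * (u - x i) ∧ T * (u - x i) ≤ b i := by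
  obtain ⟨i, hi, h1, h2⟩ := exists_extending_right s (fun i => 1 - x i) b T (by
    intro v hv
    obtain ⟨i, hi, h⟩ := hcov (1 - v) ⟨by linarith [hv.2], by linarith [hv.1]⟩
    refine ⟨i, hi, ?_⟩
    rwa [show v - (1 - x i) = -(1 - v - x i) by ring, abs_neg]) hT (1 - u)
    (by linarith) (by linarith)
  exact ⟨i, hi, by linarith, by linarith⟩

/-- If the open intervals cover `[0,1]`, compactness gives a uniform margin: the minimum of
`u ↦ max_i (b i - T * |u - x i|)` is positive. -/
lemma exists_slack (s : Finset ℕ) (x b : ℕ → ℝ) (T : ℝ)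
    (hcov : ∀ u ∈ Set.Icc (0:ℝ) 1, ∃ i ∈ s, T * |u - x i| < b i) :
    ∃ δ > 0, ∀ u ∈ Set.Icc (0:ℝ) 1, ∃ i ∈ s, T * |u - x i| + δ ≤ b i := by
  have hs : s.Nonempty := by
    obtain ⟨i, hi, -⟩ := hcov 0 (by simp)
    exact ⟨i, hi⟩
  have hcont : Continuous fun u : ℝ => s.sup' hs (fun i => b i - T * |u - x i|) :=
    Continuous.finset_sup'_apply hs (fun i _ => by fun_prop)
  obtain ⟨m, hm, hmin⟩ := isCompact_Icc.exists_isMinOn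
    (Set.nonempty_Icc.2 (zero_le_one' ℝ)) hcont.continuousOn
  refine ⟨s.sup' hs (fun i => b i - T * |m - x i|), ?_, fun u hu => ?_⟩
  · obtain ⟨i, hi, h⟩ := hcov m hm
    exact (Finset.lt_sup'_iff hs).2 ⟨i, hi, by linarith⟩
  · obtain ⟨i, hi, h⟩ := (Finset.le_sup'_iff hs).1 (isMinOn_iff.1 hmin u hu)
    exact ⟨i, hi, by linarith⟩


/-- With dummy sensors `x 0 = 0, b 0 = 0` and `x (n+1) = 1, b (n+1) = 0`, the
optimal RadSC lifetime `T > 0` is determined by two sensors: there exist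
`0 ≤ i < k ≤ n+1` with `x i < x k` such that `T = (b i + b k) / (x k - x i)`. -/
theorem opt_lifetime_determined_by_pair
    (n : ℕ) (x b : ℕ → ℝ)
    (hmono : ∀ i, 1 ≤ i → i < n → x i ≤ x (i+1))
    (hx : ∀ i ∈ Finset.Icc 1 n, x i ∈ Set.Icc (0:ℝ) 1)
    (hb : ∀ i ∈ Finset.Icc 1 n, 0 < b i)
    (hx0 : x 0 = 0) (hb0 : b 0 = 0)
    (hxn : x (n+1) = 1) (hbn : b (n+1) = 0)
    (T : ℝ) (hT : 0 < T)
    (hach : ∃ ρ : ℕ → ℝ, (∀ i ∈ Finset.Icc 1 n, 0 ≤ ρ i) ∧ RadLifetime n x b ρ T)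
    (hopt : ∀ (ρ : ℕ → ℝ) (T' : ℝ), (∀ i ∈ Finset.Icc 1 n, 0 ≤ ρ i) →
      RadLifetime n x b ρ T' → T' ≤ T) :
    ∃ i k : ℕ, i < k ∧ k ≤ n + 1 ∧ x i < x k ∧ T = (b i + b k) / (x k - x i) := by
  obtain ⟨ρ, -, hlife⟩ := hach
  have hcov : ∀ u ∈ Set.Icc (0:ℝ) 1, ∃ i ∈ Finset.Icc 1 n, T * |u - x i| ≤ b i := by
    intro u hu
    obtain ⟨i, hi, hpos, hle, hTi⟩ := hlife u hu
    exact ⟨i, hi, (mul_le_mul_of_nonneg_left hle hT.le).trans ((le_div_iff₀ hpos).1 hTi)⟩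
  have hmono' : MonotoneOn x (Set.Icc 1 n) :=
    monotoneOn_of_le_add_one Set.ordConnected_Icc
      (fun a _ ha ha' => hmono a ha.1 (Nat.lt_of_succ_le ha'.2))
  by_contra hcon
  -- No two intervals touch; sensors `0` and `n+1` are the degenerate intervals `{0}` and `{1}`.
  have hne : ∀ i k, i < k → k ≤ n + 1 → x i < x k → T * (x k - x i) ≠ b i + b k := by
    intro i k hik hk hlt heq
    exact hcon ⟨i, k, hik, hk, hlt, (eq_div_iff (sub_pos.2 hlt).ne').2 heq⟩
  have hopen : ∀ u ∈ Set.Icc (0:ℝ) 1, ∃ i ∈ Finset.Icc 1 n, T * |u - x i| < b i := by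
    intro u hu
    by_contra! hno
    -- An interval containing `u` has `u` as an endpoint.
    have hright : u < 1 → ∃ k ∈ Finset.Icc 1 n, T * (x k - u) = b k := by
      intro h1
      obtain ⟨k, hk, ha, hb'⟩ := exists_extending_right _ x b T hcov hT u hu.1 h1
      refine ⟨k, hk, ?_⟩
      have := hno k hk
      rcases abs_cases (u - x k) with h | h <;> rw [h.1] at this <;> linarith
    have hleft : 0 < u → ∃ i ∈ Finset.Icc 1 n, T * (u - x i) = b i := by
      intro h0
      obtain ⟨i, hi, ha, hb'⟩ := exists_extending_left _ x b T hcov hT u h0 hu.2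
      refine ⟨i, hi, ?_⟩
      have := hno i hi
      rcases abs_cases (u - x i) with h | h <;> rw [h.1] at this <;> linarith
    rcases hu.1.eq_or_lt with h0 | h0
    · obtain ⟨k, hk, hek⟩ := hright (by linarith)
      have hbk := hb k hk
      rw [← h0] at hek
      rw [Finset.mem_Icc] at hk
      exact hne 0 k (by omega) (by omega) (by rw [hx0]; nlinarith)
        (by rw [hx0, hb0]; linarith)
    obtain ⟨i, hi, hei⟩ := hleft h0
    have hbi := hb i hi
    rcases hu.2.eq_or_lt with h1 | h1
    · rw [h1] at hei
      rw [Finset.mem_Icc] at hi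
      exact hne i (n + 1) (by omega) le_rfl (by rw [hxn]; nlinarith)
        (by rw [hxn, hbn]; linarith)
    · obtain ⟨k, hk, hek⟩ := hright h1
      have hbk := hb k hk
      have hlt : x i < x k := by nlinarith
      rw [Finset.mem_Icc] at hi hk
      have hik : i < k := by
        by_contra! hki
        exact absurd (hmono' hk hi hki) (not_le.2 hlt)
      exact hne i k hik (by omega) hlt (by linarith)
  obtain ⟨δ, hδ, hslack⟩ := exists_slack _ x b T hopen
  have hT' : 0 < T + δ := by linarith
  have hbetter := hopt (fun i => b i / (T + δ)) (T + δ)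
    (fun i hi => (div_pos (hb i hi) hT').le) (by
      intro u hu
      obtain ⟨i, hi, h⟩ := hslack u hu
      have hbi := hb i hi
      have hxi := hx i hi
      have hdist : |u - x i| ≤ 1 :=
        abs_le.2 ⟨by linarith [hu.1, hxi.2], by linarith [hu.2, hxi.1]⟩
      refine ⟨i, hi, div_pos hbi hT', (le_div_iff₀ hT').2 (by nlinarith), ?_⟩
      rw [div_div_cancel₀ hbi.ne'])
  linarith
end

section
/- Let (x,b) be a RadSC instance with x_1 ≤ … ≤ x_n ∈ [0,1] and b_i > 0, and append dummy sensors x_0 = 0, b_0 = 0 and x_{n+1} = 1, b_{n+1} = 0. For 0 ≤ i < k ≤ n+1 with x_i < x_k, let T_{ik} = (b_i + b_k)/(x_k − x_i), and call T_{ik} feasible if the assignment ρ_ℓ = b_ℓ/T_{ik} (for ℓ = 1,…,n) has lifetime T_{ik}. Then the optimal lifetime of (x,b) equals the maximum feasible candidate: T* = max{ T_{ik} : 0 ≤ i < k ≤ n+1, x_i < x_k, T_{ik} is feasible }. -/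
theorem radLifetime_mul_abs_le {n : ℕ} {x b ρ : ℕ → ℝ} {T : ℝ} (hT : 0 < T)
    (h : RadLifetime n x b ρ T) :
    ∀ u ∈ Set.Icc (0:ℝ) 1, ∃ i ∈ Finset.Icc 1 n, T * |u - x i| ≤ b i := by
  intro u hu
  obtain ⟨i, hi, hρ, hc, hl⟩ := h u hu
  refine ⟨i, hi, ?_⟩
  rw [le_div_iff₀ hρ] at hl
  exact (mul_le_mul_of_nonneg_left hc hT.le).trans hl

theorem radLifetime_of_mul_abs_le {n : ℕ} {x b : ℕ → ℝ} {T : ℝ} (hT : 0 < T)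
    (hb : ∀ i ∈ Finset.Icc 1 n, 0 < b i)
    (h : ∀ u ∈ Set.Icc (0:ℝ) 1, ∃ i ∈ Finset.Icc 1 n, T * |u - x i| ≤ b i) :
    RadLifetime n x b (fun ℓ => b ℓ / T) T := by
  intro u hu
  obtain ⟨i, hi, hc⟩ := h u hu
  have hbi := hb i hi
  refine ⟨i, hi, by positivity, ?_, ?_⟩
  · rw [le_div_iff₀ hT]; linarith
  · exact (div_div_cancel₀ hbi.ne').ge

/-- With dummy sensors `x 0 = 0, b 0 = 0` and `x (n+1) = 1, b (n+1) = 0`, the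
optimal RadSC lifetime `T` equals the maximum feasible candidate
`T_{ik} = (b i + b k)/(x k - x i)` over `0 ≤ i < k ≤ n+1` with `x i < x k`,
where `T_{ik}` is feasible if the assignment `ρ ℓ = b ℓ / T_{ik}` has lifetime
`T_{ik}`: some feasible candidate attains `T`, and every feasible candidate is
at most `T`. -/
theorem opt_lifetime_eq_max_feasible_candidate
    (n : ℕ) (hn : 1 ≤ n) (x b : ℕ → ℝ)
    (hmono : ∀ i, 1 ≤ i → i < n → x i ≤ x (i+1))
    (hx : ∀ i ∈ Finset.Icc 1 n, x i ∈ Set.Icc (0:ℝ) 1)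
    (hb : ∀ i ∈ Finset.Icc 1 n, 0 < b i)
    (hx0 : x 0 = 0) (hb0 : b 0 = 0)
    (hxn : x (n+1) = 1) (hbn : b (n+1) = 0)
    (T : ℝ)
    (hach : ∃ ρ : ℕ → ℝ, (∀ i ∈ Finset.Icc 1 n, 0 ≤ ρ i) ∧ RadLifetime n x b ρ T)
    (hopt : ∀ (ρ : ℕ → ℝ) (T' : ℝ), (∀ i ∈ Finset.Icc 1 n, 0 ≤ ρ i) →
      RadLifetime n x b ρ T' → T' ≤ T) :
    (∃ i k : ℕ, i < k ∧ k ≤ n + 1 ∧ x i < x k ∧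
      T = (b i + b k) / (x k - x i) ∧
      RadLifetime n x b (fun ℓ => b ℓ / ((b i + b k) / (x k - x i)))
        ((b i + b k) / (x k - x i))) ∧
    (∀ i k : ℕ, i < k → k ≤ n + 1 → x i < x k →
      RadLifetime n x b (fun ℓ => b ℓ / ((b i + b k) / (x k - x i)))
        ((b i + b k) / (x k - x i)) →
      (b i + b k) / (x k - x i) ≤ T) := by
  have hb' : ∀ i ≤ n + 1, 0 ≤ b i := by
    intro i hi
    rcases Nat.eq_zero_or_pos i with rfl | h0
    · exact hb0.ge
    rcases Nat.lt_or_ge n i with h1 | h1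
    · obtain rfl : i = n + 1 := by omega
      exact hbn.ge
    · exact (hb i (Finset.mem_Icc.2 ⟨h0, h1⟩)).le
  have hmono' : ∀ i k, 1 ≤ i → i ≤ k → k ≤ n → x i ≤ x k := by
    intro i k hi hik
    induction k, hik using Nat.le_induction with
    | base => intro _; exact le_rfl
    | succ k hk ih =>
      intro hkn
      exact (ih (by omega)).trans (hmono k (by omega) (by omega))
  have hT : 0 < T := by
    -- Radius `1` for every sensor covers `[0,1]` and has lifetime at least `b 1` at sensor `1`.
    have h1 : 1 ∈ Finset.Icc 1 n := Finset.mem_Icc.2 ⟨le_rfl, hn⟩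
    refine (hb 1 h1).trans_le (hopt (fun _ => 1) (b 1) (fun _ _ => zero_le_one) ?_)
    intro u hu
    have hx1 := hx 1 h1
    refine ⟨1, h1, one_pos, ?_, by simp⟩
    rw [abs_le]
    constructor <;> linarith [hu.1, hu.2, hx1.1, hx1.2]
  obtain ⟨ρ, -, hlife⟩ := hach
  have hcov := radLifetime_mul_abs_le hT hlife
  refine ⟨?_, ?_⟩
  · by_contra hcon
    have hno : ∀ i k, i < k → k ≤ n + 1 → x i < x k → b i + b k ≠ T * (x k - x i) := by
      intro i k hik hk hxx he
      have hTe : (b i + b k) / (x k - x i) = T := by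
        rw [he, mul_div_assoc, div_self (sub_pos.2 hxx).ne', mul_one]
      refine hcon ⟨i, k, hik, hk, hxx, hTe.symm, ?_⟩
      rw [hTe]
      exact radLifetime_of_mul_abs_le hT hb hcov
    obtain ⟨S, hS, hTS⟩ : ∃ S, (∀ i ∈ Finset.range (n + 2), ∀ k ∈ Finset.range (n + 2),
        T * (x k - x i) < b i + b k → S * (x k - x i) < b i + b k) ∧ T < S := by
      have h1 : ∀ᶠ S in nhdsWithin T (Set.Ioi T), ∀ i ∈ Finset.range (n + 2),
          ∀ k ∈ Finset.range (n + 2),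
          T * (x k - x i) < b i + b k → S * (x k - x i) < b i + b k := by
        refine Filter.Eventually.filter_mono nhdsWithin_le_nhds ?_
        rw [Filter.eventually_all_finset]
        intro i _
        rw [Filter.eventually_all_finset]
        intro k _
        by_cases h : T * (x k - x i) < b i + b k
        · have hc : Continuous fun S : ℝ => S * (x k - x i) := by fun_prop
          filter_upwards [hc.continuousAt.eventually_lt_const h] with S hS _ using hS
        · exact Filter.Eventually.of_forall fun S h' => absurd h' h
      exact (h1.and self_mem_nhdsWithin).exists
    have hS0 : 0 < S := hT.trans hTS
    obtain ⟨u, hu, hunc⟩ : ∃ u ∈ Set.Icc (0:ℝ) 1, ∀ i ∈ Finset.Icc 1 n, b i < S * |u - x i| := by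
      by_contra! h
      have := hopt _ S (fun i hi => (div_pos (hb i hi) hS0).le)
        (radLifetime_of_mul_abs_le hS0 hb h)
      linarith
    classical
    -- The dummies are placed by hand: at `u = 0` or `u = 1` an inequality alone would put a
    -- dummy on both sides.
    let L := insert 0 ((Finset.Icc 1 n).filter fun i => x i ≤ u)
    let R := insert (n + 1) ((Finset.Icc 1 n).filter fun i => u < x i)
    have hL : ∀ i ∈ L, i = 0 ∨ (i ∈ Finset.Icc 1 n ∧ x i ≤ u) := by
      intro i hi
      simpa only [L, Finset.mem_insert, Finset.mem_filter] using hi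
    have hR : ∀ i ∈ R, i = n + 1 ∨ (i ∈ Finset.Icc 1 n ∧ u < x i) := by
      intro i hi
      simpa only [R, Finset.mem_insert, Finset.mem_filter] using hi
    have hLe : ∀ i ∈ L, b i ≤ S * (u - x i) := by
      intro i hi
      rcases hL i hi with rfl | ⟨h1, h2⟩
      · rw [hb0, hx0, sub_zero]
        exact mul_nonneg hS0.le hu.1
      · have := hunc i h1
        rw [abs_of_nonneg (by linarith)] at this
        exact this.le
    have hRe : ∀ i ∈ R, b i ≤ S * (x i - u) := by
      intro i hi
      rcases hR i hi with rfl | ⟨h1, h2⟩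
      · rw [hbn, hxn]
        exact mul_nonneg hS0.le (by linarith [hu.2])
      · have := hunc i h1
        rw [abs_sub_comm, abs_of_nonneg (by linarith)] at this
        exact this.le
    have hgap : ∀ i ∈ L, ∀ k ∈ R, b i + b k < T * (x k - x i) := by
      intro i hi k hk
      have hik : i < k ∧ k ≤ n + 1 ∧ x i < x k := by
        rcases hL i hi with rfl | ⟨h1, h2⟩ <;> rcases hR k hk with rfl | ⟨h3, h4⟩
        · exact ⟨by omega, le_rfl, by rw [hx0, hxn]; exact one_pos⟩
        · have h3' := Finset.mem_Icc.1 h3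
          exact ⟨by omega, by omega, by rw [hx0]; linarith [hu.1]⟩
        · have h1' := Finset.mem_Icc.1 h1
          refine ⟨by omega, le_rfl, ?_⟩
          have := hLe i hi
          have h5 := hb i h1
          have : 0 < u - x i := pos_of_mul_pos_right (h5.trans_le this) hS0.le
          rw [hxn]; linarith [hu.2]
        · have h1' := Finset.mem_Icc.1 h1
          have h3' := Finset.mem_Icc.1 h3
          refine ⟨?_, by omega, by linarith⟩
          by_contra! hki
          linarith [hmono' k i h3'.1 hki h1'.2]
      obtain ⟨h1, h2, h3⟩ := hik
      have hle : b i + b k ≤ T * (x k - x i) := by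
        by_contra! hlt
        have := hS i (Finset.mem_range.2 (by omega)) k (Finset.mem_range.2 (by omega)) hlt
        have h5 := hLe i hi
        have h6 := hRe k hk
        linarith
      exact lt_of_le_of_ne hle (hno i k h1 h2 h3)
    have h0L : 0 ∈ L := Finset.mem_insert_self _ _
    have hnR : n + 1 ∈ R := Finset.mem_insert_self _ _
    -- All interval ends are scaled by `T`, which avoids divisions.
    obtain ⟨i, hi, himax⟩ := L.exists_max_image (fun i => T * x i + b i) ⟨0, h0L⟩
    obtain ⟨k, hk, hkmin⟩ := R.exists_min_image (fun i => T * x i - b i) ⟨n + 1, hnR⟩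
    have hik := hgap i hi k hk
    obtain ⟨v, hv⟩ : ∃ v, T * v = ((T * x i + b i) + (T * x k - b k)) / 2 :=
      ⟨_, mul_div_cancel₀ _ hT.ne'⟩
    have hv0 : 0 ≤ v := by
      have := himax 0 h0L
      simp only [hx0, hb0] at this
      refine nonneg_of_mul_nonneg_right (a := T) ?_ hT
      linarith
    have hv1 : v ≤ 1 := by
      have := hkmin (n + 1) hnR
      simp only [hxn, hbn] at this
      refine le_of_mul_le_mul_left (a := T) ?_ hT
      linarith
    obtain ⟨j, hj, hjv⟩ := hcov v ⟨hv0, hv1⟩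
    rcases le_or_gt (x j) u with h | h
    · have h1 := himax j (Finset.mem_insert_of_mem (Finset.mem_filter.2 ⟨hj, h⟩))
      have h2 := mul_le_mul_of_nonneg_left (le_abs_self (v - x j)) hT.le
      linarith
    · have h1 := hkmin j (Finset.mem_insert_of_mem (Finset.mem_filter.2 ⟨hj, h⟩))
      have h2 := mul_le_mul_of_nonneg_left (neg_abs_le (v - x j)) hT.le
      linarith
  · intro i k hik hk hxx hl
    refine hopt _ _ (fun j hj => ?_) hl
    have h1 := hb' i (by omega)
    have h2 := hb' k hk
    exact div_nonneg (hb j hj).le (div_nonneg (by linarith) (sub_pos.2 hxx).le)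
end
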